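/- arXiv:1305.6162 — 2 statements merged into one kernel-verified Lean document; each statement's English description precedes it below -/
import Mathlib

section
/- Under the isomorphism Ψ : M^p_q → (V^{⊗n})_k, N_w ↦ v_{η_min·w}, the canonical basis element N̲_w of M^p_q is mapped to Lusztig's canonical basis element v^{◊}_{η_min·w} of V^{⊗n}, for every w ∈ W^{p+q}. -/
open scoped Classical

set_option maxHeartbeats 1000000
set_option synthInstance.maxHeartbeats 200000

noncomputable section

abbrev K : Type := RatFunc ℂ

noncomputable def q : K := RatFunc.X

/-- The quantum integer `[k] = (q^k - q^{-k})/(q - q^{-1})`. -/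
noncomputable def qnum (k : ℕ) : K := (q ^ k - q⁻¹ ^ k) / (q - q⁻¹)

/-- The quantum factorial `[k]! = [k][k-1]⋯[1]`. -/
noncomputable def qfact : ℕ → K
  | 0 => 1
  | k + 1 => qnum (k + 1) * qfact k

/-- The underlying vector space of `V(a_1) ⊗ ⋯ ⊗ V(a_l)`, with standard basis indexed by
sequences `η ∈ {0,1}^l`. -/
abbrev V (n : ℕ) : Type := (Fin n → Fin 2) → K

/-- The standard basis vector `v^a_η`. -/
noncomputable def eb {n : ℕ} (η : Fin n → Fin 2) : V n := fun γ => if γ = η then 1 else 0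

/-- The number of `1`s in `γ` strictly before position `i` (the Koszul sign exponent). -/
def onesBefore {n : ℕ} (γ : Fin n → Fin 2) (i : Fin n) : ℕ :=
  (Finset.univ.filter (fun k => k < i ∧ γ k = 1)).card

/-- The action of `E` on `V(a_1) ⊗ ⋯ ⊗ V(a_l)` (via the iterated comultiplication
`Δ(E) = E ⊗ K⁻¹ + 1 ⊗ E`, with the Koszul sign rule). -/
noncomputable def Eop (a : ℕ → ℕ) (n : ℕ) : Module.End K (V n) where
  toFun f := fun γ => ∑ i : Fin n,
    if γ i = 0 then
      ((-1 : K) ^ onesBefore γ i) * qnum (a i)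
        * q ^ (-((∑ j ∈ Finset.univ.filter (fun j => i < j), a j : ℕ) : ℤ))
        * f (Function.update γ i 1)
    else 0
  map_add' f g := by
    funext γ
    simp only [Pi.add_apply, ← Finset.sum_add_distrib]
    refine Finset.sum_congr rfl fun i _ => ?_
    split_ifs <;> ring
  map_smul' c f := by
    funext γ
    simp only [Pi.smul_apply, smul_eq_mul, RingHom.id_apply, Finset.mul_sum]
    refine Finset.sum_congr rfl fun i _ => ?_
    split_ifs <;> ring

/-- The action of `F` on `V(a_1) ⊗ ⋯ ⊗ V(a_l)` (via the iterated comultiplication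
`Δ(F) = F ⊗ 1 + K ⊗ F`, with the Koszul sign rule). -/
noncomputable def Fop (a : ℕ → ℕ) (n : ℕ) : Module.End K (V n) where
  toFun f := fun γ => ∑ i : Fin n,
    if γ i = 1 then
      ((-1 : K) ^ onesBefore γ i)
        * q ^ (∑ j ∈ Finset.univ.filter (fun j => j < i), a j)
        * f (Function.update γ i 0)
    else 0
  map_add' f g := by
    funext γ
    simp only [Pi.add_apply, ← Finset.sum_add_distrib]
    refine Finset.sum_congr rfl fun i _ => ?_
    split_ifs <;> ring
  map_smul' c f := by
    funext γ
    simp only [Pi.smul_apply, smul_eq_mul, RingHom.id_apply, Finset.mul_sum]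
    refine Finset.sum_congr rfl fun i _ => ?_
    split_ifs <;> ring

/-- The number of entries of `η` equal to `1` (the super degree of `v_η`). -/
def ones {m : ℕ} (η : Fin m → Fin 2) : ℕ := (Finset.univ.filter (fun i => η i = 1)).card

/-- The number of entries of `η` equal to `0`. -/
def zeros {m : ℕ} (η : Fin m → Fin 2) : ℕ := (Finset.univ.filter (fun i => η i = 0)).card

/-- The parity twist `x ↦ (-1)^{|x|}·x` (on homogeneous components). -/
noncomputable def twist {m : ℕ} (x : V m) : V m := fun η => (-1 : K) ^ ones η * x η

/-- The bar involution of `V(a_1) ⊗ ⋯ ⊗ V(a_m)`, defined inductively from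
`bar v^a_i = v^a_i` on each factor by `bar (w ⊗ w') = Θ'(bar w ⊗ bar w')` with
`Θ' = 1 + (q⁻¹ - q) E ⊗ F` (with the Koszul sign rule) and `bar q = q⁻¹`. -/
noncomputable def barV (a : ℕ → ℕ) : (m : ℕ) → V m → V m
  | 0, f => f
  | m + 1, f => fun γ =>
    if γ (Fin.last m) = 0 then
      barV a m (fun δ => f (Fin.snoc δ 0)) (fun i => γ i.castSucc)
    else
      barV a m (fun δ => f (Fin.snoc δ 1)) (fun i => γ i.castSucc)
        + (q⁻¹ - q) *
          Eop a m (twist (barV a m (fun δ => f (Fin.snoc δ 0)))) (fun i => γ i.castSucc)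

def s (n : ℕ) (i : Fin (n - 1)) : Equiv.Perm (Fin n) :=
  Equiv.swap ⟨(i : ℕ), by have := i.isLt; omega⟩ ⟨(i : ℕ) + 1, by have := i.isLt; omega⟩

def wordProd (n : ℕ) (l : List (Fin (n - 1))) : Equiv.Perm (Fin n) :=
  (l.map (s n)).prod

def len (n : ℕ) (w : Equiv.Perm (Fin n)) : ℕ :=
  sInf {k | ∃ l : List (Fin (n - 1)), l.length = k ∧ wordProd n l = w}

def bruhatLE (n : ℕ) (u w : Equiv.Perm (Fin n)) : Prop :=
  ∃ l : List (Fin (n - 1)), l.length = len n w ∧ wordProd n l = w ∧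
    ∃ t : List (Fin (n - 1)), t.Sublist l ∧ wordProd n t = u

def bruhatLT (n : ℕ) (u w : Equiv.Perm (Fin n)) : Prop :=
  bruhatLE n u w ∧ u ≠ w

/-- The parabolic subgroup of `S_n` generated by the simple transpositions indexed by `P`. -/
def parab (n : ℕ) (P : Finset (Fin (n - 1))) : Subgroup (Equiv.Perm (Fin n)) :=
  Subgroup.closure {σ | ∃ i ∈ P, σ = s n i}

/-- `w` is a shortest coset representative for `(S_k × S_{l-k}) \ S_l` (the parabolic
subgroup generated by all simple reflections except `s_k`). -/
def shortRep (l k : ℕ) (w : Equiv.Perm (Fin l)) : Prop :=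
  ∀ x ∈ parab l (Finset.univ.filter (fun i : Fin (l - 1) => (i : ℕ) + 1 ≠ k)),
    len l w ≤ len l (x * w)

/-- The minimal `{0,1}`-sequence `η_min = (0,…,0,1,…,1)` with `k` zeros. -/
def etaMin (l k : ℕ) : Fin l → Fin 2 := fun i => if (i : ℕ) < k then 0 else 1

/-- The partial order on the standard basis vectors of a weight space: within the weight
with `k` zeros, `η < γ` iff `η = η_min·u`, `γ = η_min·w` for shortest coset
representatives `u ≺ w` in the Bruhat order. -/
def seqLT (l k : ℕ) (η γ : Fin l → Fin 2) : Prop :=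
  ∃ u w : Equiv.Perm (Fin l), shortRep l k u ∧ shortRep l k w ∧ bruhatLT l u w ∧
    η = (fun i => etaMin l k (u i)) ∧ γ = (fun i => etaMin l k (w i))

/-- The bar involution of `V(a)`: the semilinear extension (with respect to the field
homomorphism `barK`, which implements `q ↦ q⁻¹`) of the map `barV` computing the bar
involution on the standard basis vectors. -/
noncomputable def barSemi (barK : K →+* K) (a : ℕ → ℕ) (l : ℕ) (f : V l) : V l :=
  barV a l (fun η => barK (f η))

/-- `v` is the canonical basis element `v^{◊a}_η` of `V(a)`: it is bar-invariant and
`v - v^a_η` is a `q·ℤ[q]`-linear combination of standard basis vectors strictly smaller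
than `v^a_η`. -/
def IsCanon (barK : K →+* K) (a : ℕ → ℕ) (l : ℕ) (η : Fin l → Fin 2) (v : V l) : Prop :=
  barSemi barK a l v = v ∧
  ∃ R : (Fin l → Fin 2) → Polynomial ℤ,
    (∀ γ, ¬ seqLT l (zeros η) γ η → R γ = 0) ∧
    v = eb η + ∑ γ : Fin l → Fin 2, (q * Polynomial.aeval q (R γ)) • eb γ

/-- The constant sequence `(1,1,…)`: all tensor factors are the vector representation. -/
def one' : ℕ → ℕ := fun _ => 1

/-- `w` is a shortest coset representative for `W_P \ S_n`. -/
def IsShort (n : ℕ) (P : Finset (Fin (n - 1))) (w : Equiv.Perm (Fin n)) : Prop :=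
  ∀ x ∈ parab n P, len n w ≤ len n (x * w)

/-- The indices of the simple reflections generating `W_q = ⟨s_1,…,s_{k-1}⟩` (0-based). -/
def Qset (n k : ℕ) : Finset (Fin (n - 1)) :=
  Finset.univ.filter (fun i => (i : ℕ) + 1 < k)

/-- The indices of the simple reflections generating `W_p = ⟨s_{k+1},…,s_{n-1}⟩` (0-based). -/
def Pset (n k : ℕ) : Finset (Fin (n - 1)) :=
  Finset.univ.filter (fun i => k ≤ (i : ℕ))

/-- `C` is the canonical basis of the mixed induced module with standard basis `N`
(indexed by the permutations satisfying `short`) and bar involution `barM`. -/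
def IsCanonBasis (n : ℕ) {M : Type} [AddCommGroup M] [Module K M]
    (short : Equiv.Perm (Fin n) → Prop) (N : Equiv.Perm (Fin n) → M)
    (barM : M → M) (C : Equiv.Perm (Fin n) → M) : Prop :=
  ∀ w, short w →
    barM (C w) = C w ∧
    ∃ R : Equiv.Perm (Fin n) → Polynomial ℤ,
      (∀ w', ¬ (short w' ∧ bruhatLT n w' w) → R w' = 0) ∧
      C w = N w + ∑ w' : Equiv.Perm (Fin n), (q * Polynomial.aeval q (R w')) • N w'

/-!
STATEMENT 10: Under the isomorphism `Ψ : M^p_q → (V^{⊗n})_k`, `N_w ↦ v_{η_min·w}`, the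
canonical basis element `N̲_w` of the mixed induced Hecke module `M^p_q` is mapped to
Lusztig's canonical basis element `v^◊_{η_min·w}` of `V^{⊗n}`, for every `w ∈ W^{p+q}`.

Here `W_q = ⟨s_1,…,s_{k-1}⟩`, `W_p = ⟨s_{k+1},…,s_{n-1}⟩`, the Hecke algebra with its
standard basis and bar involution is encoded as in the previous statements, the bar
involution of `V^{⊗n}` is the concrete `barV` (built from `Θ' = 1 + (q⁻¹-q)E⊗F`), and
Lusztig's canonical basis of the weight space is encoded by the predicate `IsCanon`.
-/


namespace S10

set_option linter.all false

def sn {m : ℕ} (δ : Fin m → Fin 2) (b : Fin 2) : Fin (m + 1) → Fin 2 :=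
  Fin.snoc (α := fun _ => Fin 2) δ b

@[simp] lemma sn_last {m : ℕ} (δ : Fin m → Fin 2) (b : Fin 2) : sn δ b (Fin.last m) = b := by
  simp [sn]

@[simp] lemma sn_cast {m : ℕ} (δ : Fin m → Fin 2) (b : Fin 2) (i : Fin m) :
    sn δ b i.castSucc = δ i := by
  simp [sn]

lemma exists_sn {m : ℕ} (γ : Fin (m + 1) → Fin 2) : ∃ δ b, γ = sn δ b := by
  refine ⟨fun i => γ i.castSucc, γ (Fin.last m), ?_⟩
  funext i
  refine Fin.lastCases ?_ (fun j => ?_) i <;> simp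

lemma sn_inj {m : ℕ} (δ δ' : Fin m → Fin 2) (b b' : Fin 2) :
    sn δ b = sn δ' b' ↔ δ = δ' ∧ b = b' := by
  constructor
  · intro h
    refine ⟨?_, ?_⟩
    · funext i
      simpa using congrFun h i.castSucc
    · simpa using congrFun h (Fin.last m)
  · rintro ⟨rfl, rfl⟩; rfl

def cc {m : ℕ} (b : Fin 2) (f : V (m + 1)) : V m := fun δ => f (sn δ b)

lemma cc_apply {m : ℕ} (b : Fin 2) (f : V (m + 1)) (δ : Fin m → Fin 2) :
    cc b f δ = f (sn δ b) := rfl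

lemma cc_ext {m : ℕ} {f g : V (m + 1)} (h0 : cc 0 f = cc 0 g) (h1 : cc 1 f = cc 1 g) :
    f = g := by
  funext γ
  obtain ⟨δ, b, rfl⟩ := exists_sn γ
  fin_cases b
  · exact congrFun h0 δ
  · exact congrFun h1 δ

lemma cc_add {m : ℕ} (b : Fin 2) (f g : V (m + 1)) : cc b (f + g) = cc b f + cc b g := rfl
lemma cc_smul {m : ℕ} (b : Fin 2) (c : K) (f : V (m + 1)) : cc b (c • f) = c • cc b f := rfl

lemma cc0_bar (a : ℕ → ℕ) {m : ℕ} (f : V (m + 1)) :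
    cc 0 (barV a (m + 1) f) = barV a m (cc 0 f) := by
  funext δ
  simp [cc, barV]
  rfl

lemma cc1_bar (a : ℕ → ℕ) {m : ℕ} (f : V (m + 1)) :
    cc 1 (barV a (m + 1) f) = barV a m (cc 1 f)
      + (q⁻¹ - q) • Eop a m (twist (barV a m (cc 0 f))) := by
  funext δ
  simp [cc, barV]
  rfl

lemma qnum_one : qnum 1 = 1 := by
  have h : (RatFunc.X : K) ≠ 0 := RatFunc.X_ne_zero
  have h1 : (q : K) - q⁻¹ ≠ 0 := by
    intro h2
    have h3 : (RatFunc.X : K) * RatFunc.X = 1 := by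
      have : (RatFunc.X : K) = RatFunc.X⁻¹ := sub_eq_zero.mp h2
      nth_rewrite 2 [this]
      exact mul_inv_cancel₀ h
    have h4 : algebraMap (Polynomial ℂ) K (Polynomial.X * Polynomial.X)
        = algebraMap (Polynomial ℂ) K 1 := by
      rw [map_mul, RatFunc.algebraMap_X, map_one, h3]
    have h5 := RatFunc.algebraMap_injective ℂ h4
    have h6 := congrArg (Polynomial.eval 0) h5
    simp at h6
  unfold qnum
  rw [pow_one, pow_one, div_self h1]

lemma q_ne : (q : K) ≠ 0 := RatFunc.X_ne_zero

lemma ones_sn {m : ℕ} (δ : Fin m → Fin 2) (b : Fin 2) :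
    ones (sn δ b) = ones δ + if b = 1 then 1 else 0 := by
  unfold ones
  simp only [Finset.card_filter]
  rw [Fin.sum_univ_castSucc]
  simp

lemma onesBefore_cast {m : ℕ} (δ : Fin m → Fin 2) (b : Fin 2) (i : Fin m) :
    onesBefore (sn δ b) i.castSucc = onesBefore δ i := by
  unfold onesBefore
  simp only [Finset.card_filter]
  rw [Fin.sum_univ_castSucc]
  have : ¬ (Fin.last m < i.castSucc) := by
    rw [Fin.lt_def]; simp
  simp [this]

lemma onesBefore_last {m : ℕ} (δ : Fin m → Fin 2) (b : Fin 2) :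
    onesBefore (sn δ b) (Fin.last m) = ones δ := by
  unfold onesBefore ones
  simp only [Finset.card_filter]
  rw [Fin.sum_univ_castSucc]
  simp [Fin.castSucc_lt_last]

lemma card_gt_cast {m : ℕ} (i : Fin m) :
    (∑ j ∈ Finset.univ.filter (fun j : Fin (m+1) => i.castSucc < j), one' j)
      = (∑ j ∈ Finset.univ.filter (fun j : Fin m => i < j), one' j) + 1 := by
  simp only [Finset.sum_filter]
  rw [Fin.sum_univ_castSucc]
  simp [one', Fin.castSucc_lt_last]

lemma update_sn_cast {m : ℕ} (δ : Fin m → Fin 2) (b c : Fin 2) (i : Fin m) :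
    Function.update (sn δ b) i.castSucc c = sn (Function.update δ i c) b := by
  funext j
  refine Fin.lastCases ?_ (fun j => ?_) j
  · rw [Function.update_of_ne (Fin.castSucc_lt_last i).ne']; simp
  · by_cases h : j = i
    · subst h; simp
    · rw [Function.update_of_ne (by simpa using h)]; simp [h]

lemma update_sn_last {m : ℕ} (δ : Fin m → Fin 2) (b c : Fin 2) :
    Function.update (sn δ b) (Fin.last m) c = sn δ c := by
  funext j
  refine Fin.lastCases ?_ (fun j => ?_) j
  · simp
  · rw [Function.update_of_ne (Fin.castSucc_lt_last j).ne]; simp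

lemma Eop_apply (a : ℕ → ℕ) {m : ℕ} (f : V m) (γ : Fin m → Fin 2) :
    Eop a m f γ = ∑ i : Fin m,
    if γ i = 0 then
      ((-1 : K) ^ onesBefore γ i) * qnum (a i)
        * q ^ (-((∑ j ∈ Finset.univ.filter (fun j => i < j), a j : ℕ) : ℤ))
        * f (Function.update γ i 1)
    else 0 := rfl


lemma E_sn {m : ℕ} (f : V (m + 1)) (δ : Fin m → Fin 2) (b : Fin 2) :
    Eop one' (m+1) f (sn δ b) = q⁻¹ * Eop one' m (cc b f) δ
      + if b = 0 then (-1) ^ ones δ * f (sn δ 1) else 0 := by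
  rw [Eop_apply, Fin.sum_univ_castSucc, Eop_apply, Finset.mul_sum]
  congr 1
  · refine Finset.sum_congr rfl fun i _ => ?_
    rw [sn_cast]
    split_ifs
    · rw [onesBefore_cast, update_sn_cast, card_gt_cast]
      have : (-((((∑ j ∈ Finset.univ.filter (fun j : Fin m => i < j), one' j) + 1 : ℕ)) : ℤ))
        = -(((∑ j ∈ Finset.univ.filter (fun j : Fin m => i < j), one' j) : ℕ) : ℤ) + (-1) := by
        push_cast; ring
      rw [this, zpow_add₀ q_ne, zpow_neg_one]
      simp only [cc, Fin.val_castSucc]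
      ring
    · simp
  · rw [sn_last]
    split_ifs
    · rw [onesBefore_last, update_sn_last]
      have : (Finset.univ.filter (fun j : Fin (m+1) => Fin.last m < j)) = ∅ := by
        ext j; simp [Fin.le_last]
      rw [this]
      simp [one', qnum_one]
    · rfl

lemma cc0_E {m : ℕ} (f : V (m + 1)) :
    cc 0 (Eop one' (m+1) f) = q⁻¹ • Eop one' m (cc 0 f) + twist (cc 1 f) := by
  funext δ
  rw [cc_apply, E_sn]; simp [twist, cc]

lemma cc1_E {m : ℕ} (f : V (m + 1)) :
    cc 1 (Eop one' (m+1) f) = q⁻¹ • Eop one' m (cc 1 f) := by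
  funext δ
  rw [cc_apply, E_sn]; simp

lemma tw_add {m : ℕ} (x y : V m) : twist (x + y) = twist x + twist y := by
  funext δ; simp [twist, mul_add]
lemma tw_smul {m : ℕ} (c : K) (x : V m) : twist (c • x) = c • twist x := by
  funext δ; simp [twist]; ring
lemma tw_tw {m : ℕ} (x : V m) : twist (twist x) = x := by
  funext δ; simp [twist, ← mul_assoc, ← mul_pow]
lemma cc0_tw {m : ℕ} (f : V (m + 1)) : cc 0 (twist f) = twist (cc 0 f) := by
  funext δ; simp [twist, cc, ones_sn]
lemma cc1_tw {m : ℕ} (f : V (m + 1)) : cc 1 (twist f) = (-1 : K) • twist (cc 1 f) := by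
  funext δ; simp [twist, cc, ones_sn, pow_succ]

lemma tw_E : ∀ {m : ℕ} (f : V m), twist (Eop one' m f) = (-1 : K) • Eop one' m (twist f)
  | 0, f => by
    funext δ
    simp [twist, Eop_apply]
  | m + 1, f => by
    apply cc_ext
    · rw [cc0_tw, cc0_E, cc_smul, cc0_E, cc0_tw, cc1_tw, tw_add, tw_smul, tw_E, tw_smul, tw_tw]
      funext δ
      simp only [Pi.add_apply, Pi.smul_apply, Pi.sub_apply, Pi.zero_apply, smul_eq_mul]
      ring
    · rw [cc1_tw, cc1_E, cc_smul, cc1_E, cc1_tw, tw_smul, tw_E, map_smul]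

lemma E_E : ∀ {m : ℕ} (f : V m), Eop one' m (Eop one' m f) = 0
  | 0, f => by
    funext δ
    simp [Eop_apply]
  | m + 1, f => by
    apply cc_ext
    · rw [cc0_E, cc0_E, cc1_E, map_add, map_smul, E_E, tw_smul, tw_E]
      change _ = (0 : V m)
      funext δ
      simp only [Pi.add_apply, Pi.smul_apply, Pi.sub_apply, Pi.zero_apply, smul_eq_mul]
      ring
    · rw [cc1_E, cc1_E, map_smul, E_E]
      change _ = (0 : V m)
      funext δ
      simp only [Pi.add_apply, Pi.smul_apply, Pi.sub_apply, Pi.zero_apply, smul_eq_mul]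
      ring


lemma B_add : ∀ {m : ℕ} (f g : V m), barV one' m (f + g) = barV one' m f + barV one' m g
  | 0, f, g => rfl
  | m + 1, f, g => by
    apply cc_ext
    · rw [cc_add, cc0_bar, cc0_bar, cc0_bar, cc_add, B_add]
    · rw [cc_add, cc1_bar, cc1_bar, cc1_bar, cc_add, cc_add, B_add, B_add, tw_add, map_add]
      funext δ
      simp only [Pi.add_apply, Pi.smul_apply, Pi.sub_apply, Pi.zero_apply, smul_eq_mul]
      ring

lemma B_smul : ∀ {m : ℕ} (c : K) (f : V m), barV one' m (c • f) = c • barV one' m f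
  | 0, c, f => rfl
  | m + 1, c, f => by
    apply cc_ext
    · rw [cc_smul, cc0_bar, cc0_bar, cc_smul, B_smul]
    · rw [cc_smul, cc1_bar, cc1_bar, cc_smul, cc_smul, B_smul, B_smul, tw_smul, map_smul]
      funext δ
      simp only [Pi.add_apply, Pi.smul_apply, Pi.sub_apply, Pi.zero_apply, smul_eq_mul]
      ring

/-- The two-site operators, with four parameters. -/
def Op (x y z w : K) {m : ℕ} (a b : Fin m) (f : V m) : V m := fun γ =>
  if γ a = γ b then (if γ a = 0 then x else y) * f γ
  else f (γ ∘ Equiv.swap a b) + (if γ a = 1 then z else w) * f γ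

lemma sn_swap {m : ℕ} (δ : Fin m → Fin 2) (c : Fin 2) (a b : Fin m) :
    sn δ c ∘ Equiv.swap a.castSucc b.castSucc = sn (δ ∘ Equiv.swap a b) c := by
  funext j
  refine Fin.lastCases ?_ (fun j => ?_) j
  · simp only [Function.comp]
    rw [Equiv.swap_apply_of_ne_of_ne (Fin.castSucc_lt_last a).ne' (Fin.castSucc_lt_last b).ne']
    simp
  · simp only [Function.comp, sn_cast]
    have : Equiv.swap a.castSucc b.castSucc j.castSucc = (Equiv.swap a b j).castSucc := by
      simp only [Equiv.swap_apply_def, Fin.castSucc_inj]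
      split_ifs <;> rfl
    rw [this, sn_cast]

lemma cc_Op (x y z w : K) {m : ℕ} (a b : Fin m) (c : Fin 2) (f : V (m + 1)) :
    cc c (Op x y z w a.castSucc b.castSucc f) = Op x y z w a b (cc c f) := by
  funext δ
  simp only [cc, Op, sn_cast, sn_swap]

lemma sn2_swap {m : ℕ} (δ : Fin m → Fin 2) (c d : Fin 2) :
    sn (sn δ c) d ∘ Equiv.swap (Fin.last m).castSucc (Fin.last (m+1)) = sn (sn δ d) c := by
  funext j
  refine Fin.lastCases ?_ (fun j => ?_) j
  · simp
  · refine Fin.lastCases ?_ (fun j => ?_) j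
    · simp
    · simp only [Function.comp]
      rw [Equiv.swap_apply_of_ne_of_ne]
      · simp
      · simpa using (Fin.castSucc_lt_last j).ne
      · exact (Fin.castSucc_lt_last _).ne

section
variable (x y z w : K) {m : ℕ} (f : V (m + 2))

abbrev OpL : V (m + 2) := Op x y z w (Fin.last m).castSucc (Fin.last (m+1)) f

lemma OpL_00 : cc 0 (cc 0 (OpL x y z w f)) = x • cc 0 (cc 0 f) := by
  funext δ; simp [cc, Op]
lemma OpL_11 : cc 1 (cc 1 (OpL x y z w f)) = y • cc 1 (cc 1 f) := by
  funext δ; simp [cc, Op]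
lemma OpL_10 : cc 1 (cc 0 (OpL x y z w f)) = cc 0 (cc 1 f) + z • cc 1 (cc 0 f) := by
  funext δ; simp [cc, Op, sn2_swap]
lemma OpL_01 : cc 0 (cc 1 (OpL x y z w f)) = cc 1 (cc 0 f) + w • cc 0 (cc 1 f) := by
  funext δ; simp [cc, Op, sn2_swap]
end

lemma Op_add (x y z w : K) {m : ℕ} (a b : Fin m) (f g : V m) :
    Op x y z w a b (f + g) = Op x y z w a b f + Op x y z w a b g := by
  funext δ; simp only [Op, Pi.add_apply]; split_ifs <;> ring

lemma Op_smul (x y z w : K) {m : ℕ} (a b : Fin m) (c : K) (f : V m) :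
    Op x y z w a b (c • f) = c • Op x y z w a b f := by
  funext δ; simp only [Op, Pi.smul_apply, smul_eq_mul]; split_ifs <;> ring

lemma ones_comp {m : ℕ} (γ : Fin m → Fin 2) (e : Equiv.Perm (Fin m)) :
    ones (γ ∘ e) = ones γ := by
  unfold ones
  simp only [Finset.card_filter]
  exact Equiv.sum_comp e (fun i => if γ i = 1 then 1 else 0)

lemma Op_tw (x y z w : K) {m : ℕ} (a b : Fin m) (f : V m) :
    Op x y z w a b (twist f) = twist (Op x y z w a b f) := by
  funext δ
  simp only [Op, twist, ones_comp]
  split_ifs <;> ring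

abbrev Tinv {m : ℕ} (a b : Fin m) (f : V m) : V m := Op q (-q⁻¹) 0 (-(q⁻¹ - q)) a b f
abbrev Tbar {m : ℕ} (a b : Fin m) (f : V m) : V m := Op q (-q⁻¹) (-(q⁻¹ - q)) 0 a b f

lemma Tinv_E : ∀ {m : ℕ} (a b : Fin m) (_ : (b : ℕ) = a + 1) (f : V m),
    Eop one' m (Tinv a b f) = Tinv a b (Eop one' m f)
  | 0, a, _, _, _ => a.elim0
  | m + 1, a, b, h, f => by
    rcases Fin.eq_castSucc_or_eq_last b with ⟨b, rfl⟩ | rfl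
    · obtain ⟨a, rfl⟩ : ∃ a' : Fin m, a = a'.castSucc := by
        refine ⟨⟨a, ?_⟩, ?_⟩
        · have := b.isLt; simp at h; omega
        · rfl
      have h' : (b : ℕ) = a + 1 := by simpa using h
      apply cc_ext
      · rw [cc0_E, cc_Op, cc_Op, cc_Op, cc0_E, Tinv_E a b h', Op_add, Op_smul, Op_tw]
      · rw [cc1_E, cc_Op, cc_Op, cc1_E, Tinv_E a b h', Op_smul]
    · cases m with
      | zero => exfalso; simp at h
      | succ m =>
        obtain rfl : a = (Fin.last m).castSucc := by
          apply Fin.ext; simp at h ⊢; omega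
        have hq := q_ne
        apply cc_ext <;> apply cc_ext
        · rw [OpL_00, cc0_E, cc0_E, cc_add, cc_add, cc_smul, cc_smul, cc0_E, cc0_E, cc0_tw, cc0_tw,
            OpL_00, OpL_10, OpL_01, map_smul, tw_add, tw_add, tw_smul, tw_smul]
          funext δ
          simp only [Pi.add_apply, Pi.smul_apply, Pi.sub_apply, Pi.zero_apply, smul_eq_mul]
          (try field_simp) <;> ring
        · rw [OpL_10, cc0_E, cc0_E, cc1_E, cc_add, cc_add, cc_smul, cc_smul, cc_smul,
            cc1_E, cc1_E, cc0_E, cc1_tw, cc1_tw,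
            OpL_10, OpL_11, map_add, tw_smul, map_smul]
          funext δ
          simp only [Pi.add_apply, Pi.smul_apply, Pi.sub_apply, Pi.zero_apply, smul_eq_mul]
          (try field_simp) <;> ring
        · rw [OpL_01, cc1_E, cc1_E, cc0_E, cc_add, cc_smul, cc_smul, cc_smul,
            cc1_E, cc0_E, cc0_E, cc1_tw,
            OpL_01, OpL_11, map_add, tw_smul, map_smul]
          funext δ
          simp only [Pi.add_apply, Pi.smul_apply, Pi.sub_apply, Pi.zero_apply, smul_eq_mul]
          (try field_simp) <;> ring
        · rw [OpL_11, cc1_E, cc1_E, cc_smul, cc_smul, cc1_E, cc1_E, OpL_11, map_smul]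
          funext δ
          simp only [Pi.add_apply, Pi.smul_apply, Pi.sub_apply, Pi.zero_apply, smul_eq_mul]
          (try field_simp) <;> ring

lemma B_T : ∀ {m : ℕ} (a b : Fin m) (_ : (b : ℕ) = a + 1) (f : V m),
    barV one' m (Tbar a b f) = Tinv a b (barV one' m f)
  | 0, a, _, _, _ => a.elim0
  | m + 1, a, b, h, f => by
    rcases Fin.eq_castSucc_or_eq_last b with ⟨b, rfl⟩ | rfl
    · obtain ⟨a, rfl⟩ : ∃ a' : Fin m, a = a'.castSucc := by
        refine ⟨⟨a, ?_⟩, ?_⟩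
        · have := b.isLt; simp at h; omega
        · rfl
      have h' : (b : ℕ) = a + 1 := by simpa using h
      apply cc_ext
      · rw [cc0_bar, cc_Op, cc_Op, cc0_bar, B_T a b h']
      · rw [cc1_bar, cc_Op, cc_Op, cc_Op, cc1_bar, B_T a b h', B_T a b h', Op_add, Op_smul,
          ← Op_tw, Tinv_E a b h']
    · cases m with
      | zero => exfalso; simp at h
      | succ m =>
        obtain rfl : a = (Fin.last m).castSucc := by
          apply Fin.ext; simp at h ⊢; omega
        have hq := q_ne
        have e00 : ∀ f : V (m+2), cc 0 (cc 0 (barV one' (m+2) f)) = barV one' m (cc 0 (cc 0 f)) := by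
          intro f
          rw [cc0_bar, cc0_bar]
        have e10 : ∀ f : V (m+2), cc 1 (cc 0 (barV one' (m+2) f)) = barV one' m (cc 1 (cc 0 f))
            + (q⁻¹ - q) • Eop one' m (twist (barV one' m (cc 0 (cc 0 f)))) := by
          intro f
          rw [cc0_bar, cc1_bar]
        have e01 : ∀ f : V (m+2), cc 0 (cc 1 (barV one' (m+2) f)) = barV one' m (cc 0 (cc 1 f))
            + (q⁻¹ - q) • (q⁻¹ • Eop one' m (twist (barV one' m (cc 0 (cc 0 f))))
              - barV one' m (cc 1 (cc 0 f)) - (q⁻¹ - q) • Eop one' m (twist (barV one' m (cc 0 (cc 0 f))))) := by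
          intro f
          rw [cc1_bar, cc_add, cc_smul, cc0_bar, cc0_E, cc0_tw, cc1_tw, cc0_bar, cc1_bar]
          simp only [tw_add, tw_tw, tw_smul, tw_E]
          funext δ
          simp only [Pi.add_apply, Pi.smul_apply, Pi.sub_apply, Pi.zero_apply, smul_eq_mul]
          ring
        have e11 : ∀ f : V (m+2), cc 1 (cc 1 (barV one' (m+2) f)) = barV one' m (cc 1 (cc 1 f))
            + (q⁻¹ - q) • Eop one' m (twist (barV one' m (cc 0 (cc 1 f))))
              - ((q⁻¹ - q) * q⁻¹) • Eop one' m (twist (barV one' m (cc 1 (cc 0 f)))) := by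
          intro f
          rw [cc1_bar, cc_add, cc_smul, cc1_bar, cc1_E, cc1_tw, cc1_bar,
            tw_add, tw_smul, tw_E, tw_tw, map_smul, map_add, map_smul, map_smul, E_E]
          funext δ
          simp only [Pi.add_apply, Pi.smul_apply, Pi.sub_apply, Pi.zero_apply, smul_eq_mul]
          ring
        apply cc_ext <;> apply cc_ext
        · rw [OpL_00, e00, e00, OpL_00, B_smul]
        · rw [OpL_10, e10, e01, OpL_10, OpL_00]
          simp only [B_smul, B_add, tw_smul, tw_add, map_smul, map_add]
          funext δ
          simp only [Pi.add_apply, Pi.smul_apply, Pi.sub_apply, Pi.zero_apply, smul_eq_mul]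
          (try field_simp) <;> ring
        · rw [OpL_01, e10, e01, e01, OpL_10, OpL_00, OpL_01]
          simp only [B_smul, B_add, tw_smul, tw_add, map_smul, map_add]
          funext δ
          simp only [Pi.add_apply, Pi.smul_apply, Pi.sub_apply, Pi.zero_apply, smul_eq_mul]
          (try field_simp) <;> ring
        · rw [OpL_11, e11, e11, OpL_11, OpL_10, OpL_01]
          simp only [B_smul, B_add, tw_smul, tw_add, map_smul, map_add]
          funext δ
          simp only [Pi.add_apply, Pi.smul_apply, Pi.sub_apply, Pi.zero_apply, smul_eq_mul]
          (try field_simp) <;> ring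

/-- The sum of the positions of the ones. -/
def sg {m : ℕ} (γ : Fin m → Fin 2) : ℕ := ∑ i : Fin m, if γ i = 1 then (i : ℕ) else 0

lemma sg_sn {m : ℕ} (δ : Fin m → Fin 2) (b : Fin 2) :
    sg (sn δ b) = sg δ + if b = 1 then m else 0 := by
  unfold sg
  rw [Fin.sum_univ_castSucc]
  simp

lemma sg_update {m : ℕ} (γ : Fin m → Fin 2) (i : Fin m) (h : γ i = 0) :
    sg (Function.update γ i 1) = sg γ + i := by
  unfold sg
  rw [← Finset.add_sum_erase _ _ (Finset.mem_univ i),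
    ← Finset.add_sum_erase (f := fun j => if γ j = 1 then (j : ℕ) else 0) _ (Finset.mem_univ i)]
  have : ∑ x ∈ Finset.univ.erase i, (if Function.update γ i 1 x = 1 then (x : ℕ) else 0)
      = ∑ x ∈ Finset.univ.erase i, (if γ x = 1 then (x : ℕ) else 0) := by
    refine Finset.sum_congr rfl fun x hx => ?_
    rw [Function.update_of_ne (Finset.ne_of_mem_erase hx)]
  rw [this]
  simp [h]
  omega

lemma bar_tri : ∀ {m : ℕ} (f : V m) (γ : Fin m → Fin 2),
    (∀ δ, sg δ < sg γ → f δ = 0) → barV one' m f γ = f γ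
  | 0, f, γ, h => rfl
  | m + 1, f, γ, h => by
    obtain ⟨δ, b, rfl⟩ := exists_sn γ
    have hb : b = 0 ∨ b = 1 := by fin_cases b <;> simp
    rcases hb with rfl | rfl
    · have h1 := congrFun (cc0_bar one' f) δ
      rw [cc_apply] at h1
      rw [h1, bar_tri]
      · rfl
      · intro ε hε
        apply h
        rw [sg_sn, sg_sn]; simpa using hε
    · have h1 := congrFun (cc1_bar one' f) δ
      rw [cc_apply] at h1
      have h2 : Eop one' m (twist (barV one' m (cc 0 f))) δ = 0 := by
        rw [Eop_apply]
        refine Finset.sum_eq_zero fun i _ => ?_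
        split_ifs with hi
        · have hs : ∀ ε : Fin m → Fin 2, sg ε ≤ sg (Function.update δ i 1) → cc 0 f ε = 0 := by
            intro ε hε
            apply h
            rw [sg_update _ _ hi] at hε
            rw [sg_sn, sg_sn]
            have := i.isLt
            simp; omega
          have h3 : barV one' m (cc 0 f) (Function.update δ i 1) = 0 := by
            rw [bar_tri, hs _ le_rfl]
            intro ε hε
            exact hs ε hε.le
          simp [twist, h3]
        · rfl
      rw [h1, Pi.add_apply, Pi.smul_apply, h2, bar_tri]
      · simp; rfl
      · intro ε hε
        apply h
        rw [sg_sn, sg_sn]; simpa using hε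

lemma barV_zero (m : ℕ) : barV one' m (0 : V m) = 0 := by
  have := B_smul (0 : K) (0 : V m)
  simpa using this

lemma twist_zero (m : ℕ) : twist (0 : V m) = 0 := by
  funext δ; simp [twist]

lemma etaMin_succ (m k : ℕ) : etaMin (m + 1) k = sn (etaMin m k) (if m < k then 0 else 1) := by
  funext i
  refine Fin.lastCases ?_ (fun j => ?_) i
  · simp [etaMin]
  · simp [etaMin]

lemma cc_eb {m : ℕ} (δ : Fin m → Fin 2) (b c : Fin 2) :
    cc c (eb (sn δ b)) = if c = b then eb δ else 0 := by
  funext ε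
  simp only [cc, eb, sn_inj]
  by_cases h : c = b <;> simp [h, eb]

lemma E_eb_zero (m k : ℕ) (h : m ≤ k) : Eop one' m (twist (eb (etaMin m k))) = 0 := by
  funext δ
  rw [Eop_apply]
  refine Finset.sum_eq_zero fun i _ => ?_
  split_ifs with hi
  · have : eb (etaMin m k) (Function.update δ i 1) = 0 := by
      simp only [eb]
      rw [if_neg]
      intro h1
      have h2 := congrFun h1 i
      have := i.isLt
      have h3 : (i : ℕ) < k := by omega
      simp [etaMin, h3] at h2
    simp [twist, this]
  · rfl

lemma bar_min (k : ℕ) : ∀ m : ℕ, barV one' m (eb (etaMin m k)) = eb (etaMin m k)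
  | 0 => rfl
  | m + 1 => by
    rw [etaMin_succ]
    by_cases h : m < k
    · simp only [h, if_true]
      apply cc_ext
      · rw [cc0_bar, cc_eb]; simp [bar_min k m]
      · rw [cc1_bar, cc_eb, cc_eb]
        simp [barV_zero, bar_min k m, E_eb_zero m k h.le]
    · simp only [h, if_false]
      apply cc_ext
      · rw [cc0_bar, cc_eb]; simp [barV_zero]
      · rw [cc1_bar, cc_eb, cc_eb]
        simp [barV_zero, bar_min k m, twist_zero]

lemma aeval_inj (p r : Polynomial ℤ) (h : Polynomial.aeval (q : K) p = Polynomial.aeval (q : K) r) :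
    p = r := by
  have key : ∀ p : Polynomial ℤ, Polynomial.aeval (q : K) p
      = algebraMap (Polynomial ℂ) K (p.map (Int.castRingHom ℂ)) := by
    intro p
    induction p using Polynomial.induction_on' with
    | add a b ha hb => simp [ha, hb]
    | monomial n a =>
      simp [Polynomial.aeval_monomial, ← Polynomial.C_mul_X_pow_eq_monomial, q]
  rw [key, key] at h
  have h1 := RatFunc.algebraMap_injective ℂ h
  exact Polynomial.map_injective _ (RingHom.injective_int _) h1

lemma selfdual (barK : K →+* K) (hbarKq : barK q = q⁻¹) (p : Polynomial ℤ)
    (h : barK (q * Polynomial.aeval q p) = q * Polynomial.aeval q p) : p = 0 := by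
  have h1 : barK (Polynomial.aeval q p) = Polynomial.aeval (q⁻¹ : K) p := by
    rw [Polynomial.aeval_eq_sum_range, Polynomial.aeval_eq_sum_range, map_sum]
    refine Finset.sum_congr rfl fun i _ => ?_
    rw [Algebra.smul_def, Algebra.smul_def, map_mul, map_pow, hbarKq]
    simp
  rw [map_mul, h1, hbarKq] at h
  have h2 : Polynomial.aeval (q : K) p.reverse = q ^ p.natDegree * Polynomial.aeval (q⁻¹ : K) p := by
    letI : Invertible (q⁻¹ : K) := invertibleOfNonzero (inv_ne_zero q_ne)
    have h4 := Polynomial.eval₂_reverse_mul_pow (algebraMap ℤ K) (q⁻¹ : K) p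
    rw [invOf_eq_inv, inv_inv] at h4
    rw [Polynomial.aeval_def, Polynomial.aeval_def, ← h4, inv_pow]
    have := q_ne
    field_simp
  have h5 : Polynomial.aeval (q : K) p.reverse
      = Polynomial.aeval (q : K) (Polynomial.X ^ (p.natDegree + 2) * p) := by
    rw [h2]
    simp only [map_mul, map_pow, Polynomial.aeval_X]
    have : Polynomial.aeval (q⁻¹ : K) p = q * (q * Polynomial.aeval q p) := by
      rw [← h, ← mul_assoc, mul_inv_cancel₀ q_ne, one_mul]
    rw [this]; ring
  have h6 := aeval_inj _ _ h5
  by_contra hp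
  have h7 := Polynomial.reverse_natDegree_le p
  rw [h6, Polynomial.natDegree_mul (by simp) hp, Polynomial.natDegree_X_pow] at h7
  omega

lemma uniq (barK : K →+* K) (hbarKq : barK q = q⁻¹) (n : ℕ) (x : V n)
    (R : (Fin n → Fin 2) → Polynomial ℤ) (hx : ∀ γ, x γ = q * Polynomial.aeval q (R γ))
    (hb : barSemi barK one' n x = x) : x = 0 := by
  have : ∀ N : ℕ, ∀ γ, sg γ = N → x γ = 0 := by
    intro N
    induction N using Nat.strong_induction_on with
    | _ N ih =>
      intro γ hγ
      have h1 := congrFun hb γ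
      unfold barSemi at h1
      rw [bar_tri] at h1
      · rw [hx] at h1 ⊢
        rw [selfdual barK hbarKq _ h1]; simp
      · intro δ hδ
        rw [ih (sg δ) (hγ ▸ hδ) δ rfl, map_zero]
  funext γ
  exact this _ γ rfl

def Inv {n : ℕ} (w : Equiv.Perm (Fin n)) : Finset (Fin n × Fin n) :=
  Finset.univ.filter (fun p => p.1 < p.2 ∧ w p.2 < w p.1)

lemma mem_Inv {n : ℕ} (w : Equiv.Perm (Fin n)) (x y : Fin n) :
    (x, y) ∈ Inv w ↔ x < y ∧ w y < w x := by simp [Inv]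

def inv {n : ℕ} (w : Equiv.Perm (Fin n)) : ℕ := (Inv w).card

lemma swap_lt {n : ℕ} {a b : Fin n} (h : (b : ℕ) = a + 1) {x y : Fin n}
    (h1 : ¬ (x = a ∧ y = b)) (h2 : ¬ (x = b ∧ y = a)) :
    Equiv.swap a b x < Equiv.swap a b y ↔ x < y := by
  simp only [Equiv.swap_apply_def]
  simp only [Fin.ext_iff] at h1 h2 
  split_ifs with h3 h4 h5 h6 h7 h8 h9 h10 <;> simp only [Fin.ext_iff, Fin.lt_def] at * <;> omega

lemma inv_mul {n : ℕ} (w : Equiv.Perm (Fin n)) {a b : Fin n} (h : (b : ℕ) = a + 1)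
    (hw : w a < w b) : inv (w * Equiv.swap a b) = inv w + 1 := by
  have hab : a < b := by rw [Fin.lt_def]; omega
  have key : Inv (w * Equiv.swap a b) = insert (a, b)
      ((Inv w).map (Equiv.prodCongr (Equiv.swap a b) (Equiv.swap a b)).toEmbedding) := by
    ext ⟨x, y⟩
    rw [Finset.mem_insert, Finset.mem_map_equiv, mem_Inv]
    have : (Equiv.prodCongr (Equiv.swap a b) (Equiv.swap a b)).symm (x, y)
      = (Equiv.swap a b x, Equiv.swap a b y) := by simp
    rw [this, mem_Inv]
    by_cases h1 : x = a ∧ y = b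
    · obtain ⟨rfl, rfl⟩ := h1
      simp [hab, hw]
    · by_cases h2 : x = b ∧ y = a
      · obtain ⟨rfl, rfl⟩ := h2
        simp [hab.ne', hab.le, hw.le]
      · rw [swap_lt h h1 h2]
        simp only [Prod.mk.injEq, h1, false_or, Equiv.Perm.mul_apply]
  unfold inv
  rw [key, Finset.card_insert_of_notMem, Finset.card_map]
  rw [Finset.mem_map_equiv]
  have : (Equiv.prodCongr (Equiv.swap a b) (Equiv.swap a b)).symm (a, b)
      = (b, a) := by simp
  rw [this, mem_Inv]
  intro h3
  exact absurd h3.1 (not_lt.mpr hab.le)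

lemma inv_one {n : ℕ} : inv (1 : Equiv.Perm (Fin n)) = 0 := by
  unfold inv Inv
  rw [Finset.card_eq_zero, Finset.filter_eq_empty_iff]
  rintro p - ⟨h1, h2⟩
  exact absurd h1 (not_lt.mpr (le_of_lt h2))

lemma inv_inv' {n : ℕ} (w : Equiv.Perm (Fin n)) : inv w⁻¹ = inv w := by
  unfold inv
  refine Finset.card_bij' (fun p _ => (w⁻¹ p.2, w⁻¹ p.1)) (fun p _ => (w p.2, w p.1)) ?_ ?_ ?_ ?_
  · rintro ⟨x, y⟩ h
    rw [mem_Inv] at h ⊢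
    simpa using h.symm
  · rintro ⟨x, y⟩ h
    rw [mem_Inv] at h ⊢
    simpa using h.symm
  · rintro ⟨x, y⟩ h
    simp
  · rintro ⟨x, y⟩ h
    simp

def lo {n : ℕ} (i : Fin (n - 1)) : Fin n := ⟨(i : ℕ), by have := i.isLt; omega⟩
def hi {n : ℕ} (i : Fin (n - 1)) : Fin n := ⟨(i : ℕ) + 1, by have := i.isLt; omega⟩

lemma s_def {n : ℕ} (i : Fin (n - 1)) : s n i = Equiv.swap (lo i) (hi i) := rfl
lemma hi_lo {n : ℕ} (i : Fin (n - 1)) : ((hi i : Fin n) : ℕ) = (lo i : Fin n) + 1 := rfl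
lemma lo_lt_hi {n : ℕ} (i : Fin (n - 1)) : (lo i : Fin n) < hi i := by
  rw [Fin.lt_def, hi_lo]; omega
lemma s_mul_s {n : ℕ} (i : Fin (n - 1)) : s n i * s n i = 1 := by
  rw [s_def]; exact Equiv.swap_mul_self _ _
lemma s_inv {n : ℕ} (i : Fin (n - 1)) : (s n i)⁻¹ = s n i := by
  rw [s_def]; exact Equiv.swap_inv _ _
lemma mul_s_s {n : ℕ} (w : Equiv.Perm (Fin n)) (i : Fin (n - 1)) : w * s n i * s n i = w := by
  rw [mul_assoc, s_mul_s, mul_one]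

lemma inv_up {n : ℕ} (w : Equiv.Perm (Fin n)) (i : Fin (n - 1)) (h : w (lo i) < w (hi i)) :
    inv (w * s n i) = inv w + 1 := inv_mul w (hi_lo i) h

lemma inv_down {n : ℕ} (w : Equiv.Perm (Fin n)) (i : Fin (n - 1)) (h : w (hi i) < w (lo i)) :
    inv w = inv (w * s n i) + 1 := by
  have := inv_up (w * s n i) i (by simpa [s_def] using h)
  rwa [mul_s_s] at this

lemma inv_le {n : ℕ} (w : Equiv.Perm (Fin n)) (i : Fin (n - 1)) : inv (w * s n i) ≤ inv w + 1 := by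
  rcases lt_or_gt_of_ne (w.injective.ne (lo_lt_hi i).ne) with h | h
  · rw [inv_up w i h]
  · have := inv_down w i h; omega

lemma exists_descent {n : ℕ} (w : Equiv.Perm (Fin n)) (hw : w ≠ 1) :
    ∃ i : Fin (n - 1), w (hi i) < w (lo i) := by
  by_contra hcon
  push Not at hcon
  apply hw
  cases n with
  | zero => exact Subsingleton.elim _ _
  | succ m =>
    have hm : StrictMono w := by
      rw [Fin.strictMono_iff_lt_succ]
      intro i
      exact lt_of_le_of_ne (hcon i) (w.injective.ne (Fin.castSucc_lt_succ).ne)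
    have h2 : ∀ i : Fin (m+1), i ≤ w i := fun i => hm.le_apply
    have h3 : ∀ N : ℕ, ∀ i : Fin (m+1), m - (i : ℕ) = N → w i ≤ i := by
      intro N i hN
      by_contra hlt
      push Not at hlt
      have h4 : ∀ j : ℕ, ∀ hj : i.val + j < m + 1, i.val + j < (w ⟨i.val + j, hj⟩).val := by
        intro j
        induction j with
        | zero => intro hj; simpa using hlt
        | succ j ih =>
          intro hj
          have h5 := ih (by omega)
          have h6 : w ⟨i.val + j, by omega⟩ < w ⟨i.val + (j+1), hj⟩ := hm (by
            rw [Fin.lt_def]; simp)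
          rw [Fin.lt_def] at h6
          omega
      have h7 := h4 (m - i.val) (by omega)
      have h8 := (w ⟨i.val + (m - i.val), by omega⟩).isLt
      omega
    ext i
    have := le_antisymm (h3 _ i rfl) (h2 i)
    rw [this]; rfl

lemma wordProd_append {n : ℕ} (l : List (Fin (n - 1))) (i : Fin (n - 1)) :
    wordProd n (l ++ [i]) = wordProd n l * s n i := by
  simp [wordProd]

lemma exists_word {n : ℕ} : ∀ (N : ℕ) (w : Equiv.Perm (Fin n)), inv w = N →
    ∃ l : List (Fin (n - 1)), l.length = N ∧ wordProd n l = w := by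
  intro N
  induction N with
  | zero =>
    intro w hw
    refine ⟨[], rfl, ?_⟩
    by_contra h
    obtain ⟨i, hi⟩ := exists_descent w (fun h1 => h (by rw [h1]; rfl))
    have := inv_down w i hi
    omega
  | succ N ih =>
    intro w hw
    have hne : w ≠ 1 := by
      rintro rfl
      rw [inv_one] at hw; omega
    obtain ⟨i, hi⟩ := exists_descent w hne
    have h1 := inv_down w i hi
    obtain ⟨l, hl, hlw⟩ := ih (w * s n i) (by omega)
    refine ⟨l ++ [i], by simp [hl], ?_⟩
    rw [wordProd_append, hlw, mul_s_s]

lemma inv_word {n : ℕ} (l : List (Fin (n - 1))) : inv (wordProd n l) ≤ l.length := by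
  induction l using List.reverseRecOn with
  | nil => simp [wordProd, inv_one]
  | append_singleton l i ih =>
    rw [wordProd_append]
    have := inv_le (wordProd n l) i
    simp; omega

lemma len_eq {n : ℕ} (w : Equiv.Perm (Fin n)) : len n w = inv w := by
  apply le_antisymm
  · obtain ⟨l, hl⟩ := exists_word _ w rfl
    exact Nat.sInf_le ⟨l, hl⟩
  · obtain ⟨l, hl⟩ := exists_word _ w rfl
    obtain ⟨l', h1, h2⟩ := Nat.sInf_mem (s := {k | ∃ l : List (Fin (n - 1)), l.length = k ∧ wordProd n l = w})
      ⟨_, l, hl⟩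
    have := inv_word l'
    rw [h2, h1] at this
    exact this

/-- All inversions of `w` cross the blocks. -/
def Blk {n : ℕ} (k : ℕ) (w : Equiv.Perm (Fin n)) : Prop :=
  ∀ x y : Fin n, x < y → w y < w x → k ≤ (w x : ℕ) ∧ (w y : ℕ) < k

lemma mem_PQ {n k : ℕ} (i : Fin (n - 1)) : i ∈ Pset n k ∪ Qset n k ↔ (i : ℕ) + 1 ≠ k := by
  simp [Pset, Qset]; omega

lemma blk_of_short {n k : ℕ} (w : Equiv.Perm (Fin n)) (hw : IsShort n (Pset n k ∪ Qset n k) w) :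
    Blk k w := by
  have h1 : ∀ j : Fin (n - 1), (j : ℕ) + 1 ≠ k → w⁻¹ (lo j) < w⁻¹ (hi j) := by
    intro j hj
    by_contra hcon
    have hlt : w⁻¹ (hi j) < w⁻¹ (lo j) :=
      lt_of_le_of_ne (not_lt.mp hcon) (w⁻¹.injective.ne (lo_lt_hi j).ne')
    have h2 := inv_down w⁻¹ j hlt
    have h3 := hw (s n j) (Subgroup.subset_closure ⟨j, (mem_PQ j).mpr hj, rfl⟩)
    rw [len_eq, len_eq, ← inv_inv' w, ← inv_inv' (s n j * w), mul_inv_rev, s_inv] at h3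
    omega
  have h2 : ∀ d : ℕ, ∀ u v : Fin n, (v : ℕ) = u + d + 1 → ((v : ℕ) < k ∨ k ≤ (u : ℕ)) →
      w⁻¹ u < w⁻¹ v := by
    intro d
    induction d with
    | zero =>
      intro u v huv hb
      have h3 := h1 ⟨u, by omega⟩ (by simp; omega)
      have e : v = hi ⟨u, by omega⟩ := Fin.ext (by simp only [hi]; omega)
      rw [e]; exact h3
    | succ d ih =>
      intro u v huv hb
      have hv := v.isLt
      have h3 := h1 ⟨u + d + 1, by omega⟩ (by simp; omega)
      have h4 := ih u ⟨u + d + 1, by omega⟩ rfl (by simp; omega)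
      refine lt_trans h4 ?_
      have e : v = hi ⟨u + d + 1, by omega⟩ := Fin.ext (by simp only [hi]; omega)
      exact lt_of_lt_of_eq h3 (congrArg _ e.symm)
  intro x y hxy hwxy
  by_contra hcon
  have h3 := h2 ((w x : ℕ) - w y - 1) (w y) (w x) (by rw [Fin.lt_def] at hwxy; omega)
    (by rw [Fin.lt_def] at hwxy; omega)
  simp at h3
  exact absurd hxy (not_lt.mpr h3.le)

lemma short_of_blk {n k : ℕ} (w : Equiv.Perm (Fin n)) (hw : Blk k w) :
    IsShort n (Pset n k ∪ Qset n k) w := by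
  intro x hx
  have hpres : ∀ u : Fin n, ((x u : ℕ) < k ↔ (u : ℕ) < k) := by
    unfold parab at hx
    induction hx using Subgroup.closure_induction with
    | mem σ hσ =>
      obtain ⟨i, hi', rfl⟩ := hσ
      rw [mem_PQ] at hi'
      intro u
      rw [s_def, Equiv.swap_apply_def]
      split_ifs with h1 h2
      · subst h1; simp [lo, hi]; omega
      · subst h2; simp [lo, hi]; omega
      · rfl
    | one => intro u; rfl
    | mul a b _ _ iha ihb =>
      intro u
      rw [Equiv.Perm.mul_apply, iha, ihb]
    | inv a _ iha =>
      intro u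
      rw [← iha]; simp
  rw [len_eq, len_eq]
  unfold inv
  apply Finset.card_le_card
  rintro ⟨a, b⟩ hab
  rw [mem_Inv] at hab ⊢
  refine ⟨hab.1, ?_⟩
  obtain ⟨h1, h2⟩ := hw a b hab.1 hab.2
  rw [Fin.lt_def]
  have h3 := (hpres (w b)).mpr h2
  have h4 := (hpres (w a)).not.mpr (by omega)
  simp only [Equiv.Perm.mul_apply]
  omega

lemma blk_mul {n k : ℕ} (w : Equiv.Perm (Fin n)) (hw : Blk k w) (i : Fin (n - 1))
    (h : ((w (lo i) : ℕ) < k ∧ k ≤ (w (hi i) : ℕ)) ∨ ((w (hi i) : ℕ) < k ∧ k ≤ (w (lo i) : ℕ))) :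
    Blk k (w * s n i) := by
  intro x y hxy hlt
  rw [s_def, Equiv.Perm.mul_apply, Equiv.Perm.mul_apply] at hlt ⊢
  by_cases h1 : x = lo i ∧ y = hi i
  · obtain ⟨rfl, rfl⟩ := h1
    simp only [Equiv.swap_apply_left, Equiv.swap_apply_right] at hlt ⊢
    rw [Fin.lt_def] at hlt
    omega
  · have h2 : ¬ (x = hi i ∧ y = lo i) := by
      rintro ⟨rfl, rfl⟩
      exact absurd hxy (not_lt.mpr (lo_lt_hi i).le)
    exact hw _ _ ((swap_lt (hi_lo i) h1 h2).mpr hxy) hlt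

lemma blk_same {n k : ℕ} (w : Equiv.Perm (Fin n)) (hw : Blk k w) (i : Fin (n - 1))
    (h : (w (lo i) : ℕ) < k ↔ (w (hi i) : ℕ) < k) :
    w (lo i) < w (hi i) ∧
    ∃ j : Fin (n - 1), (j : ℕ) = w (lo i) ∧ (j : ℕ) + 1 ≠ k ∧ w * s n i = s n j * w := by
  have hlt : w (lo i) < w (hi i) := by
    by_contra hcon
    have h2 : w (hi i) < w (lo i) :=
      lt_of_le_of_ne (not_lt.mp hcon) (w.injective.ne (lo_lt_hi i).ne')
    have := hw _ _ (lo_lt_hi i) h2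
    omega
  have hadj : (w (hi i) : ℕ) = w (lo i) + 1 := by
    by_contra hcon
    have hl := Fin.lt_def.mp hlt
    have hb := (w (hi i)).isLt
    obtain ⟨x, hx⟩ := w.surjective ⟨w (lo i) + 1, by omega⟩
    have hx' : (w x : ℕ) = w (lo i) + 1 := by rw [hx]
    rcases lt_trichotomy x (lo i) with h1 | h1 | h1
    · have := hw _ _ h1 (by rw [Fin.lt_def]; omega)
      omega
    · subst h1; omega
    · rcases lt_trichotomy x (hi i) with h2 | h2 | h2
      · rw [Fin.lt_def] at h1 h2
        simp [lo, hi] at h1 h2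
        omega
      · subst h2; omega
      · have := hw _ _ h2 (by rw [Fin.lt_def]; omega)
        omega
  refine ⟨hlt, ⟨w (lo i), by have := (w (hi i)).isLt; omega⟩, rfl, by simp; omega, ?_⟩
  rw [s_def, s_def, Equiv.mul_swap_eq_swap_mul]
  congr 2
  apply Fin.ext
  simp [hi] at hadj ⊢
  omega

abbrev T {m : ℕ} (a b : Fin m) (f : V m) : V m := Op q⁻¹ (-q) (q⁻¹ - q) 0 a b f

lemma T_eb_same {m : ℕ} (a b : Fin m) (η : Fin m → Fin 2) (h : η a = η b) :
    T a b (eb η) = (if η a = 0 then q⁻¹ else -q) • eb η := by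
  funext γ
  simp only [Op, eb, Pi.smul_apply, smul_eq_mul]
  by_cases hγ : γ = η
  · subst hγ; simp [h]
  · by_cases h1 : γ a = γ b
    · simp [h1, hγ]
    · have : ¬ (γ ∘ Equiv.swap a b = η) := by
        rintro rfl
        simp at h
        exact h1 h.symm
      simp [h1, hγ, this]

lemma T_eb_01 {m : ℕ} (a b : Fin m) (η : Fin m → Fin 2) (ha : η a = 0) (hb : η b = 1) :
    T a b (eb η) = eb (η ∘ Equiv.swap a b) := by
  have hsw : ∀ γ : Fin m → Fin 2, (γ ∘ Equiv.swap a b = η ↔ γ = η ∘ Equiv.swap a b) := by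
    intro γ
    constructor
    · rintro rfl; funext x; simp
    · rintro rfl; funext x; simp
  funext γ
  simp only [Op, eb]
  by_cases hγ : γ = η
  · subst hγ
    have : ¬ (γ = γ ∘ Equiv.swap a b) := by
      intro h
      have := congrFun h a
      simp [ha, hb] at this
    simp [ha, hb, hsw, this]
  · by_cases h1 : γ a = γ b
    · have : ¬ (γ = η ∘ Equiv.swap a b) := by
        rintro rfl
        simp [ha, hb] at h1
      simp [h1, hγ, this]
    · simp [h1, hγ, hsw]

lemma T_T {m : ℕ} (a b : Fin m) (hab : a ≠ b) (f : V m) :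
    T a b (T a b f) = (q⁻¹ - q) • T a b f + f := by
  have hsw : ∀ γ : Fin m → Fin 2, (γ ∘ Equiv.swap a b) ∘ Equiv.swap a b = γ := by
    intro γ; funext x; simp
  have h01 : ∀ x : Fin 2, x = 0 ∨ x = 1 := by decide
  have hq := q_ne
  funext γ
  simp only [Op, Pi.smul_apply, Pi.add_apply, smul_eq_mul, hsw, Function.comp,
    Equiv.swap_apply_left, Equiv.swap_apply_right]
  have hsw' : (fun x => γ (Equiv.swap a b (Equiv.swap a b x))) = γ := hsw γ
  rcases h01 (γ a) with h1 | h1 <;> rcases h01 (γ b) with h2 | h2 <;> 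
    simp [h1, h2] <;> field_simp <;> ring

lemma barSemi_add (barK : K →+* K) {n : ℕ} (f g : V n) :
    barSemi barK one' n (f + g) = barSemi barK one' n f + barSemi barK one' n g := by
  unfold barSemi
  rw [← B_add]
  congr 1
  funext η; simp

lemma barSemi_smul (barK : K →+* K) {n : ℕ} (c : K) (f : V n) :
    barSemi barK one' n (c • f) = barK c • barSemi barK one' n f := by
  unfold barSemi
  rw [← B_smul]
  congr 1
  funext η; simp

lemma barK_eb (barK : K →+* K) {n : ℕ} (η : Fin n → Fin 2) :
    (fun γ => barK (eb η γ)) = eb η := by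
  funext γ
  simp only [eb]
  split_ifs <;> simp

lemma barSemi_T (barK : K →+* K) (hbarKq : barK q = q⁻¹) {n : ℕ} (a b : Fin n)
    (h : (b : ℕ) = a + 1) (f : V n) :
    barSemi barK one' n (T a b f) = T a b (barSemi barK one' n f)
      + (-(q⁻¹ - q)) • barSemi barK one' n f := by
  have e1 : (fun η => barK (T a b f η)) = Tbar a b (fun η => barK (f η)) := by
    funext η
    simp only [Op]
    split_ifs <;> simp [hbarKq]
  have h01 : ∀ x : Fin 2, x = 0 ∨ x = 1 := by decide
  have e2 : ∀ g : V n, Tinv a b g = T a b g + (-(q⁻¹ - q)) • g := by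
    intro g
    funext γ
    simp only [Op, Pi.add_apply, Pi.smul_apply, smul_eq_mul]
    rcases h01 (γ a) with h1 | h1 <;> rcases h01 (γ b) with h2 | h2 <;> 
      simp [h1, h2] <;> ring
  unfold barSemi
  rw [e1, B_T a b h, e2]

lemma zeros_eta (n k : ℕ) (hk : k ≤ n) (w : Equiv.Perm (Fin n)) :
    zeros (fun i => etaMin n k (w i)) = k := by
  unfold zeros
  simp only [Finset.card_filter]
  rw [Equiv.sum_comp w (fun i => if etaMin n k i = 0 then 1 else 0)]
  rw [← Finset.card_filter]
  have : (Finset.univ.filter (fun i : Fin n => etaMin n k i = 0))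
      = (Finset.univ.filter (fun i : Fin n => (i : ℕ) < k)) := by
    ext i; simp [etaMin]
  rw [this, Fin.card_filter_val_lt]
  omega

end S10

theorem statement10 (n k : ℕ) (hk : k ≤ n)
    (A : Type) [Ring A] [Algebra K A]
    (H : Equiv.Perm (Fin n) → A)
    (hHLI : LinearIndependent K H)
    (hHspan : Submodule.span K (Set.range H) = ⊤)
    (hone : H 1 = 1)
    (hmul : ∀ (w : Equiv.Perm (Fin n)) (i : Fin (n - 1)),
      len n (w * s n i) = len n w + 1 → H (w * s n i) = H w * H (s n i))
    (hquad : ∀ i : Fin (n - 1),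
      H (s n i) * H (s n i) = (q⁻¹ - q) • H (s n i) + 1)
    (barK : K →+* K) (hbarKq : barK q = q⁻¹)
    (hbarKc : ∀ z : ℂ, barK (algebraMap ℂ K z) = algebraMap ℂ K z)
    (bar : A →+* A)
    (hbar_smul : ∀ (c : K) (x : A), bar (c • x) = barK c • bar x)
    (hbarH : ∀ w : Equiv.Perm (Fin n),
      bar (H w) * H w⁻¹ = 1 ∧ H w⁻¹ * bar (H w) = 1)
    (M : Type) [AddCommGroup M] [Module K M]
    (act : M → A → M)
    (hact_addl : ∀ (m m' : M) (a : A), act (m + m') a = act m a + act m' a)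
    (hact_addr : ∀ (m : M) (a b : A), act m (a + b) = act m a + act m b)
    (hact_smull : ∀ (c : K) (m : M) (a : A), act (c • m) a = c • act m a)
    (hact_smulr : ∀ (c : K) (m : M) (a : A), act m (c • a) = c • act m a)
    (hact_one : ∀ m : M, act m 1 = m)
    (hact_mul : ∀ (m : M) (a b : A), act m (a * b) = act (act m a) b)
    (N : Equiv.Perm (Fin n) → M)
    (hN : ∀ w, N w = act (N 1) (H w))
    (hgenP : ∀ i ∈ Pset n k, act (N 1) (H (s n i)) = (-q) • N 1)
    (hgenQ : ∀ i ∈ Qset n k, act (N 1) (H (s n i)) = q⁻¹ • N 1)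
    (hNLI : LinearIndependent K
      (fun w : {w : Equiv.Perm (Fin n) // IsShort n (Pset n k ∪ Qset n k) w} => N w))
    (hNspan : Submodule.span K (N '' {w | IsShort n (Pset n k ∪ Qset n k) w}) = ⊤)
    (barM : M → M)
    (hbarM_add : ∀ m m' : M, barM (m + m') = barM m + barM m')
    (hbarM_smul : ∀ (c : K) (m : M), barM (c • m) = barK c • barM m)
    (hbarM_act : ∀ (m : M) (a : A), barM (act m a) = act (barM m) (bar a))
    (hbarM_one : barM (N 1) = N 1) :
    ∀ C : Equiv.Perm (Fin n) → M,
      IsCanonBasis n (IsShort n (Pset n k ∪ Qset n k)) N barM C →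
      ∀ D : (Fin n → Fin 2) → V n,
        (∀ η : Fin n → Fin 2, zeros η = k → IsCanon barK one' n η (D η)) →
        ∀ Ψ : M →ₗ[K] V n,
          (∀ w : Equiv.Perm (Fin n), IsShort n (Pset n k ∪ Qset n k) w →
            Ψ (N w) = eb (fun i => etaMin n k (w i))) →
          ∀ w : Equiv.Perm (Fin n), IsShort n (Pset n k ∪ Qset n k) w →
            Ψ (C w) = D (fun i => etaMin n k (w i)) := by
  intro C hC D hD Ψ hΨ w hw
  have hw' := S10.blk_of_short w hw
  -- products over reduced words
  have hred : ∀ l : List (Fin (n - 1)), l.length = len n (wordProd n l) →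
      H (wordProd n l) = (l.map (fun i => H (s n i))).prod := by
    intro l
    induction l using List.reverseRecOn with
    | nil => intro _; simpa [wordProd] using hone
    | append_singleton l i ih =>
      intro hl
      rw [S10.wordProd_append] at hl ⊢
      rw [S10.len_eq] at hl
      have h1 := S10.inv_le (wordProd n l) i
      have h2 := S10.inv_word l
      simp at hl
      rw [hmul _ _ (by rw [S10.len_eq, S10.len_eq]; omega), ih (by rw [S10.len_eq]; omega)]
      simp
  have hleft : ∀ (u : Equiv.Perm (Fin n)) (j : Fin (n - 1)),
      S10.inv (s n j * u) = S10.inv u + 1 → H (s n j * u) = H (s n j) * H u := by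
    intro u j hu
    obtain ⟨l, hl, rfl⟩ := S10.exists_word _ u rfl
    have h1 : s n j * wordProd n l = wordProd n (j :: l) := by simp [wordProd]
    rw [hred l (by rw [S10.len_eq]; exact hl), h1, hred (j :: l)]
    · simp
    · rw [S10.len_eq, ← h1, hu, ← hl]; simp
  have hup : ∀ (u : Equiv.Perm (Fin n)) (i : Fin (n - 1)), u (S10.lo i) < u (S10.hi i) →
      act (N u) (H (s n i)) = N (u * s n i) := by
    intro u i hu
    rw [hN (u * s n i), hmul u i (by rw [S10.len_eq, S10.len_eq]; exact S10.inv_up u i hu),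
      hact_mul, ← hN]
  have hΨ' : ∀ u : Equiv.Perm (Fin n), S10.Blk k u → Ψ (N u) = eb (etaMin n k ∘ u) :=
    fun u hu => hΨ u (S10.short_of_blk u hu)
  -- the intertwining property on the standard basis
  have hintw0 : ∀ (i : Fin (n - 1)) (u : Equiv.Perm (Fin n)), S10.Blk k u →
      Ψ (act (N u) (H (s n i))) = S10.T (S10.lo i) (S10.hi i) (Ψ (N u)) := by
    intro i u hu
    by_cases h1 : (u (S10.lo i) : ℕ) < k <;> by_cases h2 : (u (S10.hi i) : ℕ) < k
    · obtain ⟨hlt, j, hj, hjk, hju⟩ := S10.blk_same u hu i (by simp [h1, h2])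
      rw [hup u i hlt, hju, hN (s n j * u), hleft u j (by rw [← hju]; exact S10.inv_up u i hlt),
        hact_mul, hgenQ j (by simp [Qset]; omega), hact_smull, ← hN, map_smul, hΨ' u hu,
        S10.T_eb_same _ _ _ (by simp [etaMin, h1, h2])]
      simp [etaMin, h1]
    · have hlt : u (S10.lo i) < u (S10.hi i) := by rw [Fin.lt_def]; omega
      rw [hup u i hlt, hΨ' u hu, hΨ' _ (S10.blk_mul u hu i (by omega)),
        S10.T_eb_01 _ _ _ (by simp [etaMin, h1]) (by simp [etaMin, h2])]
      rfl
    · have hb := S10.blk_mul u hu i (by omega)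
      have hlt : (u * s n i) (S10.lo i) < (u * s n i) (S10.hi i) := by
        simp [S10.s_def]; rw [Fin.lt_def]; omega
      have e1 := hup _ i hlt
      rw [S10.mul_s_s] at e1
      have e2 : Ψ (N u) = S10.T (S10.lo i) (S10.hi i) (Ψ (N (u * s n i))) := by
        rw [hΨ' u hu, hΨ' _ hb, S10.T_eb_01 _ _ _ (by simp [etaMin, S10.s_def, h2])
          (by simp [etaMin, S10.s_def, h1])]
        conv_lhs => rw [← S10.mul_s_s u i]
        rfl
      rw [← e1, ← hact_mul, hquad, hact_addr, hact_smulr, hact_one, e1, map_add, map_smul, e2,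
        S10.T_T _ _ (S10.lo_lt_hi i).ne]
    · obtain ⟨hlt, j, hj, hjk, hju⟩ := S10.blk_same u hu i (by simp [h1, h2])
      rw [hup u i hlt, hju, hN (s n j * u), hleft u j (by rw [← hju]; exact S10.inv_up u i hlt),
        hact_mul, hgenP j (by simp [Pset]; omega), hact_smull, ← hN, map_smul, hΨ' u hu,
        S10.T_eb_same _ _ _ (by simp [etaMin, h1, h2])]
      simp [etaMin, h1]
  have hzero_act : ∀ a : A, act 0 a = 0 := by
    intro a
    have := hact_smull 0 0 a
    simpa using this
  have hintw : ∀ (i : Fin (n - 1)) (m : M),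
      Ψ (act m (H (s n i))) = S10.T (S10.lo i) (S10.hi i) (Ψ m) := by
    intro i m
    have hm : m ∈ Submodule.span K (N '' {w | IsShort n (Pset n k ∪ Qset n k) w}) := by
      rw [hNspan]; trivial
    induction hm using Submodule.span_induction with
    | mem x hx =>
      obtain ⟨u, hu, rfl⟩ := hx
      exact hintw0 i u (S10.blk_of_short u hu)
    | zero =>
      rw [hzero_act, map_zero]
      have := S10.Op_smul q⁻¹ (-q) (q⁻¹ - q) 0 (S10.lo i) (S10.hi i) (0 : K) (0 : V n)
      simpa using this.symm
    | add x y _ _ hx hy => rw [hact_addl, map_add, map_add, hx, hy]; exact (S10.Op_add _ _ _ _ _ _ _ _).symm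
    | smul c x _ hx => rw [hact_smull, map_smul, map_smul, hx]; exact (S10.Op_smul _ _ _ _ _ _ _ _).symm
  -- compatibility of the bar involutions
  have hbarHi : ∀ i : Fin (n - 1), bar (H (s n i)) = H (s n i) - (q⁻¹ - q) • 1 := by
    intro i
    have h1 := (hbarH (s n i)).1
    rw [S10.s_inv] at h1
    have h2 : H (s n i) * (H (s n i) - (q⁻¹ - q) • 1) = 1 := by
      rw [mul_sub, hquad, mul_smul_comm, mul_one, add_sub_cancel_left]
    calc bar (H (s n i)) = bar (H (s n i)) * (H (s n i) * (H (s n i) - (q⁻¹ - q) • 1)) := by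
          rw [h2, mul_one]
      _ = _ := by rw [← mul_assoc, h1, one_mul]
  have hbar0 : ∀ (d : ℕ) (u : Equiv.Perm (Fin n)), S10.inv u = d → S10.Blk k u →
      barSemi barK one' n (Ψ (N u)) = Ψ (barM (N u)) := by
    intro d
    induction d with
    | zero =>
      intro u hd hu
      obtain ⟨l, hl, hlu⟩ := S10.exists_word _ u hd
      have : u = 1 := by
        rw [List.length_eq_zero_iff] at hl
        rw [← hlu, hl]; rfl
      subst this
      rw [hbarM_one, hΨ' _ hu]
      change barV one' n (fun η => barK (eb (etaMin n k) η)) = eb (etaMin n k)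
      rw [S10.barK_eb, S10.bar_min]
    | succ d ih =>
      intro u hd hu
      have hne : u ≠ 1 := by
        rintro rfl
        rw [S10.inv_one] at hd; omega
      obtain ⟨i, hi⟩ := S10.exists_descent u hne
      have h1 := S10.inv_down u i hi
      have h2 := hu _ _ (S10.lo_lt_hi i) hi
      have hb := S10.blk_mul u hu i (by omega)
      have h3 := ih (u * s n i) (by omega) hb
      have hlt : (u * s n i) (S10.lo i) < (u * s n i) (S10.hi i) := by
        simpa [S10.s_def] using hi
      have e1 := hup _ i hlt
      rw [S10.mul_s_s] at e1
      rw [← e1, hintw, hbarM_act, hbarHi, sub_eq_add_neg, ← neg_smul, hact_addr, hact_smulr,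
        hact_one, map_add, map_smul, hintw, ← h3]
      exact S10.barSemi_T barK hbarKq _ _ (S10.hi_lo i) _
  have hbarM_zero : barM 0 = 0 := by
    have := hbarM_smul 0 0
    simpa using this
  have hbarAll : ∀ m : M, barSemi barK one' n (Ψ m) = Ψ (barM m) := by
    intro m
    have hm : m ∈ Submodule.span K (N '' {w | IsShort n (Pset n k ∪ Qset n k) w}) := by
      rw [hNspan]; trivial
    induction hm using Submodule.span_induction with
    | mem x hx =>
      obtain ⟨u, hu, rfl⟩ := hx
      exact hbar0 _ u rfl (S10.blk_of_short u hu)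
    | zero =>
      rw [hbarM_zero, map_zero]
      have := S10.barSemi_smul barK (0 : K) (0 : V n)
      simpa using this
    | add x y _ _ hx hy => rw [hbarM_add, map_add, map_add, ← hx, ← hy, S10.barSemi_add]
    | smul c x _ hx => rw [hbarM_smul, map_smul, map_smul, ← hx, S10.barSemi_smul]
  -- conclusion
  obtain ⟨hC1, R, hR, hCw⟩ := hC w hw
  have hz : zeros (fun i => etaMin n k (w i)) = k := S10.zeros_eta n k hk w
  obtain ⟨hD1, S, -, hDw⟩ := hD _ hz
  rw [← sub_eq_zero]
  refine S10.uniq barK hbarKq n _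
    (fun γ => (∑ u : Equiv.Perm (Fin n),
      if IsShort n (Pset n k ∪ Qset n k) u ∧ γ = etaMin n k ∘ u then R u else 0) - S γ) ?_ ?_
  · intro γ
    have e1 : Ψ (C w) = eb (fun i => etaMin n k (w i)) + ∑ u : Equiv.Perm (Fin n),
        (q * Polynomial.aeval q (R u)) • Ψ (N u) := by
      rw [hCw, map_add, map_sum, hΨ w hw]
      congr 1
      exact Finset.sum_congr rfl fun u _ => map_smul _ _ _
    rw [e1]
    nth_rewrite 1 [hDw]
    simp only [Pi.sub_apply, Pi.add_apply, Finset.sum_apply, Pi.smul_apply, smul_eq_mul]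
    have e2 : ∑ x : Fin n → Fin 2, q * Polynomial.aeval q (S x) * eb x γ
        = q * Polynomial.aeval q (S γ) := by
      rw [Finset.sum_eq_single γ]
      · simp [eb]
      · intro b _ hb
        simp [eb, hb.symm]
      · simp
    rw [e2, map_sub, map_sum, mul_sub, Finset.mul_sum]
    rw [add_sub_add_left_eq_sub]
    congr 1
    refine Finset.sum_congr rfl fun u _ => ?_
    by_cases hu : IsShort n (Pset n k ∪ Qset n k) u
    · rw [hΨ' u (S10.blk_of_short u hu)]
      by_cases hγ : γ = etaMin n k ∘ u
      · simp [hu, hγ, eb]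
      · simp [hγ, eb]
    · rw [hR u (fun h => hu h.1)]
      simp
  · rw [sub_eq_add_neg, ← neg_one_smul K (D _), S10.barSemi_add, S10.barSemi_smul, hbarAll, hC1, hD1]
    simp
end
end

section
/- Let a = (a_1,...,a_l) be a sequence of strictly positive integers. In V(a), for each standard basis element v^a_η there is a unique bar-invariant element v^{◊a}_η such that v^{◊a}_η - v^a_η is a qℤ[q]-linear combination of standard basis elements strictly smaller than v^a_η. -/
open scoped Classical

set_option maxHeartbeats 1000000
set_option synthInstance.maxHeartbeats 200000

noncomputable section

set_option linter.unusedSimpArgs false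

/-! ### Recursive description of the operators -/

theorem onesBefore_snoc_castSucc {m : ℕ} (δ : Fin m → Fin 2) (x : Fin 2) (i : Fin m) :
    onesBefore (Fin.snoc δ x : Fin (m + 1) → Fin 2) i.castSucc = onesBefore δ i := by
  unfold onesBefore
  rw [Finset.card_filter, Finset.card_filter, Fin.sum_univ_castSucc]
  simp [Fin.le_last]

theorem onesBefore_snoc_last {m : ℕ} (δ : Fin m → Fin 2) (x : Fin 2) :
    onesBefore (Fin.snoc δ x : Fin (m + 1) → Fin 2) (Fin.last m) = ones δ := by
  unfold onesBefore ones
  rw [Finset.card_filter, Finset.card_filter, Fin.sum_univ_castSucc]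
  simp [Fin.castSucc_lt_last]

theorem ones_snoc {m : ℕ} (δ : Fin m → Fin 2) (x : Fin 2) :
    ones (Fin.snoc δ x : Fin (m + 1) → Fin 2) = ones δ + if x = 1 then 1 else 0 := by
  unfold ones
  rw [Finset.card_filter, Finset.card_filter, Fin.sum_univ_castSucc]
  simp

theorem sum_gt_castSucc (a : ℕ → ℕ) {m : ℕ} (i : Fin m) :
    (∑ j ∈ Finset.univ.filter (fun j : Fin (m + 1) => i.castSucc < j), a j)
      = (∑ j ∈ Finset.univ.filter (fun j : Fin m => i < j), a j) + a m := by
  rw [Finset.sum_filter, Finset.sum_filter, Fin.sum_univ_castSucc]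
  simp [Fin.castSucc_lt_last]

theorem sum_gt_last (a : ℕ → ℕ) {m : ℕ} :
    (∑ j ∈ Finset.univ.filter (fun j : Fin (m + 1) => Fin.last m < j), a j) = 0 := by
  rw [Finset.sum_filter, Fin.sum_univ_castSucc]
  simp [Fin.le_last]

theorem q_ne_zero : q ≠ 0 := RatFunc.X_ne_zero

/-- The components of a vector according to the last entry. -/
def lastComp {m : ℕ} (x : Fin 2) (f : V (m + 1)) : V m := fun δ => f (Fin.snoc δ x)

theorem V_ext {m : ℕ} {f g : V (m + 1)} (h0 : lastComp 0 f = lastComp 0 g) (h1 : lastComp 1 f = lastComp 1 g) :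
    f = g := by
  funext γ
  have hγ : γ = Fin.snoc (Fin.init γ) (γ (Fin.last m)) := (Fin.snoc_init_self γ).symm
  rw [hγ]
  generalize γ (Fin.last m) = x
  have hx : x = 0 ∨ x = 1 := by omega
  rcases hx with rfl | rfl
  · exact congrFun h0 _
  · exact congrFun h1 _

theorem lastComp0_Eop (a : ℕ → ℕ) (m : ℕ) (f : V (m + 1)) :
    lastComp 0 (Eop a (m + 1) f) =
      (q⁻¹ ^ a m) • Eop a m (lastComp 0 f) + qnum (a m) • twist (lastComp 1 f) := by
  funext δ
  simp only [lastComp, Eop, LinearMap.coe_mk, AddHom.coe_mk, Pi.add_apply, Pi.smul_apply, smul_eq_mul,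
    twist]
  rw [Fin.sum_univ_castSucc]
  congr 1
  · rw [Finset.mul_sum]
    refine Finset.sum_congr rfl fun i _ => ?_
    rw [Fin.snoc_castSucc, onesBefore_snoc_castSucc, sum_gt_castSucc, ← Fin.snoc_update]
    split_ifs
    · have : q ^ (-((∑ j ∈ Finset.univ.filter (fun j : Fin m => i < j), a j + a m : ℕ) : ℤ))
        = q⁻¹ ^ a m * q ^ (-((∑ j ∈ Finset.univ.filter (fun j : Fin m => i < j), a j : ℕ) : ℤ)) := by
        rw [Nat.cast_add, neg_add, zpow_add₀ q_ne_zero, mul_comm, zpow_neg, zpow_natCast, inv_pow]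
      rw [this]
      simp only [Fin.val_castSucc]
      ring
    · simp
  · rw [Fin.snoc_last, onesBefore_snoc_last, sum_gt_last, Fin.update_snoc_last]
    simp
    ring

theorem lastComp1_Eop (a : ℕ → ℕ) (m : ℕ) (f : V (m + 1)) :
    lastComp 1 (Eop a (m + 1) f) = (q⁻¹ ^ a m) • Eop a m (lastComp 1 f) := by
  funext δ
  simp only [lastComp, Eop, LinearMap.coe_mk, AddHom.coe_mk, Pi.smul_apply, smul_eq_mul]
  rw [Fin.sum_univ_castSucc]
  rw [Fin.snoc_last, if_neg (by decide), add_zero]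
  rw [Finset.mul_sum]
  refine Finset.sum_congr rfl fun i _ => ?_
  rw [Fin.snoc_castSucc, onesBefore_snoc_castSucc, sum_gt_castSucc, ← Fin.snoc_update]
  split_ifs
  · have : q ^ (-((∑ j ∈ Finset.univ.filter (fun j : Fin m => i < j), a j + a m : ℕ) : ℤ))
      = q⁻¹ ^ a m * q ^ (-((∑ j ∈ Finset.univ.filter (fun j : Fin m => i < j), a j : ℕ) : ℤ)) := by
      rw [Nat.cast_add, neg_add, zpow_add₀ q_ne_zero, mul_comm, zpow_neg, zpow_natCast, inv_pow]
    rw [this]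
    simp only [Fin.val_castSucc]
    ring
  · simp

theorem lastComp0_twist {m : ℕ} (f : V (m + 1)) : lastComp 0 (twist f) = twist (lastComp 0 f) := by
  funext δ
  simp [lastComp, twist, ones_snoc]

theorem lastComp1_twist {m : ℕ} (f : V (m + 1)) : lastComp 1 (twist f) = - twist (lastComp 1 f) := by
  funext δ
  simp [lastComp, twist, ones_snoc, pow_succ]

theorem twist_twist {m : ℕ} (f : V m) : twist (twist f) = f := by
  funext δ
  simp only [twist, ← mul_assoc, ← mul_pow]
  simp

theorem twist_add {m : ℕ} (f g : V m) : twist (f + g) = twist f + twist g := by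
  funext δ
  simp [twist, mul_add]

theorem twist_smul {m : ℕ} (c : K) (f : V m) : twist (c • f) = c • twist f := by
  funext δ
  simp only [twist, Pi.smul_apply, smul_eq_mul]
  ring

theorem twist_neg {m : ℕ} (f : V m) : twist (-f) = - twist f := by
  funext δ
  simp [twist]

theorem twist_Eop (a : ℕ → ℕ) : ∀ (m : ℕ) (f : V m), twist (Eop a m f) = - Eop a m (twist f)
  | 0, f => by
    funext δ
    simp [twist, Eop]
  | m + 1, f => by
    apply V_ext
    · change _ = - lastComp 0 (Eop a (m + 1) (twist f))
      rw [lastComp0_twist, lastComp0_Eop, lastComp0_Eop, twist_add, twist_smul, twist_smul, twist_twist,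
        twist_Eop a m, lastComp0_twist, lastComp1_twist, twist_neg, twist_twist]
      funext δ
      simp only [Pi.add_apply, Pi.smul_apply, Pi.neg_apply, Pi.zero_apply, smul_eq_mul]
      ring
    · change _ = - lastComp 1 (Eop a (m + 1) (twist f))
      rw [lastComp1_twist, lastComp1_Eop, lastComp1_Eop, twist_smul, twist_Eop a m, lastComp1_twist, map_neg]

theorem Eop_Eop (a : ℕ → ℕ) : ∀ (m : ℕ) (f : V m), Eop a m (Eop a m f) = 0
  | 0, f => by
    funext δ
    simp [Eop]
  | m + 1, f => by
    apply V_ext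
    · change _ = (0 : V m)
      rw [lastComp0_Eop, lastComp0_Eop, lastComp1_Eop, map_add, map_smul, map_smul, Eop_Eop a m, twist_smul,
        twist_Eop]
      funext δ
      simp only [Pi.add_apply, Pi.smul_apply, Pi.neg_apply, Pi.zero_apply, smul_eq_mul]
      ring
    · change _ = (0 : V m)
      rw [lastComp1_Eop, lastComp1_Eop, map_smul, Eop_Eop a m]
      funext δ
      simp only [Pi.add_apply, Pi.smul_apply, Pi.neg_apply, Pi.zero_apply, smul_eq_mul]
      ring

theorem lastComp0_barV (a : ℕ → ℕ) (m : ℕ) (f : V (m + 1)) :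
    lastComp 0 (barV a (m + 1) f) = barV a m (lastComp 0 f) := by
  funext δ
  simp only [lastComp, barV, Fin.snoc_last, Fin.snoc_castSucc, if_true]
  rfl

theorem lastComp1_barV (a : ℕ → ℕ) (m : ℕ) (f : V (m + 1)) :
    lastComp 1 (barV a (m + 1) f) =
      barV a m (lastComp 1 f) + (q⁻¹ - q) • Eop a m (twist (barV a m (lastComp 0 f))) := by
  funext δ
  simp only [lastComp, barV, Fin.snoc_last, Fin.snoc_castSucc]
  rw [if_neg (by decide)]
  rfl

theorem lastComp_add {m : ℕ} (x : Fin 2) (f g : V (m + 1)) : lastComp x (f + g) = lastComp x f + lastComp x g := rfl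
theorem lastComp_smul {m : ℕ} (x : Fin 2) (c : K) (f : V (m + 1)) : lastComp x (c • f) = c • lastComp x f := rfl

theorem barV_add (a : ℕ → ℕ) : ∀ (m : ℕ) (f g : V m), barV a m (f + g) = barV a m f + barV a m g
  | 0, f, g => rfl
  | m + 1, f, g => by
    apply V_ext
    · rw [lastComp_add, lastComp0_barV, lastComp0_barV, lastComp0_barV, lastComp_add, barV_add a m]
    · rw [lastComp_add, lastComp1_barV, lastComp1_barV, lastComp1_barV, lastComp_add, lastComp_add, barV_add a m, barV_add a m,
        twist_add, map_add]
      funext δ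
      simp only [Pi.add_apply, Pi.smul_apply, Pi.neg_apply, Pi.zero_apply, smul_eq_mul]
      ring

theorem barV_smul (a : ℕ → ℕ) : ∀ (m : ℕ) (c : K) (f : V m), barV a m (c • f) = c • barV a m f
  | 0, c, f => rfl
  | m + 1, c, f => by
    apply V_ext
    · rw [lastComp_smul, lastComp0_barV, lastComp0_barV, lastComp_smul, barV_smul a m]
    · rw [lastComp_smul, lastComp1_barV, lastComp1_barV, lastComp_smul, lastComp_smul, barV_smul a m, barV_smul a m,
        twist_smul, map_smul]
      funext δ
      simp only [Pi.add_apply, Pi.smul_apply, Pi.neg_apply, Pi.zero_apply, smul_eq_mul]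
      ring

theorem barV_zero (a : ℕ → ℕ) (m : ℕ) : barV a m 0 = 0 := by
  have := barV_smul a m 0 0
  simpa using this

theorem barV_twist (a : ℕ → ℕ) : ∀ (m : ℕ) (f : V m), barV a m (twist f) = twist (barV a m f)
  | 0, f => rfl
  | m + 1, f => by
    apply V_ext
    · rw [lastComp0_twist, lastComp0_barV, lastComp0_barV, lastComp0_twist, barV_twist a m]
    · have hneg : barV a m (- twist (lastComp 1 f)) = - barV a m (twist (lastComp 1 f)) := by
        have := barV_smul a m (-1) (twist (lastComp 1 f))
        simpa using this
      rw [lastComp1_twist, lastComp1_barV, lastComp1_barV, lastComp0_twist, lastComp1_twist, hneg, barV_twist a m,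
        barV_twist a m, twist_twist, twist_add, twist_smul, twist_Eop, twist_twist]
      funext δ
      simp only [Pi.add_apply, Pi.smul_apply, Pi.neg_apply, Pi.zero_apply, smul_eq_mul]
      ring

/-! ### The semilinear bar involution -/

theorem barSemi_add (b : K →+* K) (a : ℕ → ℕ) (m : ℕ) (f g : V m) :
    barSemi b a m (f + g) = barSemi b a m f + barSemi b a m g := by
  unfold barSemi
  rw [← barV_add]
  congr 1
  funext η
  simp

theorem barSemi_smul (b : K →+* K) (a : ℕ → ℕ) (m : ℕ) (c : K) (f : V m) :
    barSemi b a m (c • f) = b c • barSemi b a m f := by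
  unfold barSemi
  rw [← barV_smul]
  congr 1
  funext η
  simp

theorem barSemi_twist (b : K →+* K) (a : ℕ → ℕ) (m : ℕ) (f : V m) :
    barSemi b a m (twist f) = twist (barSemi b a m f) := by
  unfold barSemi
  rw [← barV_twist]
  congr 1
  funext η
  simp [twist]

theorem lastComp0_barSemi (b : K →+* K) (a : ℕ → ℕ) (m : ℕ) (f : V (m + 1)) :
    lastComp 0 (barSemi b a (m + 1) f) = barSemi b a m (lastComp 0 f) := by
  unfold barSemi
  rw [lastComp0_barV]
  rfl

theorem lastComp1_barSemi (b : K →+* K) (a : ℕ → ℕ) (m : ℕ) (f : V (m + 1)) :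
    lastComp 1 (barSemi b a (m + 1) f) =
      barSemi b a m (lastComp 1 f) + (q⁻¹ - q) • Eop a m (twist (barSemi b a m (lastComp 0 f))) := by
  unfold barSemi
  rw [lastComp1_barV]
  rfl

theorem q_sub_ne : q - q⁻¹ ≠ 0 := by
  intro h
  have h2 : q * q = 1 := by
    have : q = q⁻¹ := sub_eq_zero.mp h
    nth_rewrite 2 [this]
    exact mul_inv_cancel₀ q_ne_zero
  have h3 : (algebraMap (Polynomial ℂ) K) (Polynomial.X * Polynomial.X)
      = (algebraMap (Polynomial ℂ) K) 1 := by
    rw [map_mul, map_one, RatFunc.algebraMap_X]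
    exact h2
  have h4 := RatFunc.algebraMap_injective ℂ h3
  have := congrArg (Polynomial.eval 0) h4
  simp at this

theorem c_qnum (k : ℕ) : (q⁻¹ - q) * qnum k = q⁻¹ ^ k - q ^ k := by
  unfold qnum
  have := q_sub_ne
  rw [mul_div_assoc', div_eq_iff this]
  ring

theorem bar_qnum (b : K →+* K) (hb : b q = q⁻¹) (k : ℕ) : b (qnum k) = qnum k := by
  unfold qnum
  have := q_sub_ne
  have h2 : q⁻¹ - q ≠ 0 := by
    rw [← neg_sub]; exact neg_ne_zero.mpr this
  rw [map_div₀, map_sub, map_sub, map_pow, map_pow, map_inv₀, hb, inv_inv, div_eq_div_iff h2 this]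
  ring

theorem Eop_barSemi (b : K →+* K) (hb : b q = q⁻¹) (a : ℕ → ℕ) : ∀ (m : ℕ) (f : V m),
    barSemi b a m (Eop a m f) = Eop a m (barSemi b a m f)
  | 0, f => by
    have h1 : Eop a 0 f = 0 := by
      funext δ
      simp [Eop]
    have h2 : Eop a 0 (barSemi b a 0 f) = 0 := by
      funext δ
      simp [Eop]
    rw [h1, h2]
    funext δ
    simp [barSemi, barV]
  | m + 1, f => by
    have hq : b (q⁻¹ ^ a m) = q ^ a m := by
      rw [map_pow, map_inv₀, hb, inv_inv]
    have hc := c_qnum (a m)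
    apply V_ext
    · rw [lastComp0_barSemi, lastComp0_Eop, lastComp0_Eop, barSemi_add, barSemi_smul, barSemi_smul,
        barSemi_twist, Eop_barSemi b hb a m, hq, bar_qnum b hb, lastComp0_barSemi, lastComp1_barSemi,
        twist_add, twist_smul, twist_Eop, twist_twist]
      have : q ^ a m = q⁻¹ ^ a m - (q⁻¹ - q) * qnum (a m) := by rw [hc]; ring
      rw [this]
      funext δ
      simp only [Pi.add_apply, Pi.smul_apply, Pi.neg_apply, Pi.zero_apply, smul_eq_mul]
      ring
    · rw [lastComp1_barSemi, lastComp1_Eop, lastComp1_Eop, lastComp0_Eop, lastComp1_barSemi, barSemi_smul, barSemi_add,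
        barSemi_smul, barSemi_smul, barSemi_twist, Eop_barSemi b hb a m, Eop_barSemi b hb a m,
        hq, bar_qnum b hb, twist_add, twist_smul, twist_smul, twist_twist, twist_Eop, map_add,
        map_add, map_smul, map_smul, map_smul, map_neg, Eop_Eop]
      have : q⁻¹ ^ a m = q ^ a m + (q⁻¹ - q) * qnum (a m) := by rw [hc]; ring
      rw [this]
      funext δ
      simp only [Pi.add_apply, Pi.smul_apply, Pi.neg_apply, Pi.zero_apply, smul_eq_mul]
      ring

theorem bar_bar (b : K →+* K) (hb : b q = q⁻¹)
    (hc : ∀ z : ℂ, b (algebraMap ℂ K z) = algebraMap ℂ K z) (x : K) : b (b x) = x := by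
  have h : b.comp b = RingHom.id K := by
    apply IsLocalization.ringHom_ext (nonZeroDivisors (Polynomial ℂ))
    apply Polynomial.ringHom_ext
    · intro z
      have : (algebraMap (Polynomial ℂ) K) (Polynomial.C z) = algebraMap ℂ K z := by
        rw [RatFunc.algebraMap_C]; rfl
      simp only [RingHom.comp_apply, this, hc, RingHom.id_apply]
    · have : (algebraMap (Polynomial ℂ) K) Polynomial.X = q := RatFunc.algebraMap_X
      simp only [RingHom.comp_apply, this, hb, map_inv₀, inv_inv, RingHom.id_apply]
  exact congrArg (fun g : K →+* K => g x) h

theorem barSemi_barSemi (b : K →+* K) (hb : b q = q⁻¹)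
    (hc : ∀ z : ℂ, b (algebraMap ℂ K z) = algebraMap ℂ K z) (a : ℕ → ℕ) : ∀ (m : ℕ) (f : V m),
    barSemi b a m (barSemi b a m f) = f
  | 0, f => by
    funext δ
    simp only [barSemi, barV]
    exact bar_bar b hb hc _
  | m + 1, f => by
    apply V_ext
    · rw [lastComp0_barSemi, lastComp0_barSemi, barSemi_barSemi b hb hc a m]
    · rw [lastComp1_barSemi, lastComp0_barSemi, lastComp1_barSemi, barSemi_add, barSemi_smul,
        barSemi_barSemi b hb hc a m, Eop_barSemi b hb, barSemi_twist,
        barSemi_barSemi b hb hc a m, map_sub, map_inv₀, hb, inv_inv]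
      funext δ
      simp only [Pi.add_apply, Pi.smul_apply, Pi.neg_apply, Pi.zero_apply, smul_eq_mul]
      ring

/-! ### Laurent polynomials -/

/-- The subring `ℤ[q, q⁻¹]` of `ℂ(q)`. -/
def AA : Subring K := Subring.closure (Set.range fun z : ℤ => q ^ z)

theorem zpow_mem_AA (z : ℤ) : q ^ z ∈ AA := Subring.subset_closure ⟨z, rfl⟩

theorem q_mem_AA : q ∈ AA := by simpa using zpow_mem_AA 1

theorem qinv_mem_AA : q⁻¹ ∈ AA := by simpa using zpow_mem_AA (-1)

theorem qnum_mem_AA (k : ℕ) : qnum k ∈ AA := by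
  induction k with
  | zero => simp [qnum, AA.zero_mem]
  | succ k ih =>
    have h : qnum (k + 1) = q * qnum k + q⁻¹ ^ k := by
      unfold qnum
      have := q_sub_ne
      rw [div_eq_iff this, add_mul, mul_assoc, div_mul_cancel₀ _ this]
      rw [pow_succ, pow_succ]
      ring
    rw [h]
    exact AA.add_mem (AA.mul_mem q_mem_AA ih) (AA.pow_mem qinv_mem_AA k)

theorem aeval_mem_AA {x : K} (hx : x ∈ AA) (p : Polynomial ℤ) : Polynomial.aeval x p ∈ AA := by
  rw [Polynomial.aeval_def, Polynomial.eval₂_eq_sum_range]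
  refine AA.sum_mem fun i _ => ?_
  rw [eq_intCast]
  exact AA.mul_mem (intCast_mem AA _) (AA.pow_mem hx i)

theorem aeval_q_injective : Function.Injective (fun p : Polynomial ℤ => Polynomial.aeval q p) := by
  intro p p' h
  have key : ∀ p : Polynomial ℤ, Polynomial.aeval q p =
      algebraMap (Polynomial ℂ) K (p.map (Int.castRingHom ℂ)) := by
    intro p
    induction p using Polynomial.induction_on' with
    | add p r hp hr => rw [map_add, hp, hr, Polynomial.map_add, map_add]
    | monomial n c =>
      rw [Polynomial.aeval_monomial, Polynomial.map_monomial, ← Polynomial.C_mul_X_pow_eq_monomial,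
        map_mul, map_pow, RatFunc.algebraMap_X]
      simp [q]
  simp only [key] at h
  have := RatFunc.algebraMap_injective ℂ h
  exact Polynomial.map_injective _ (RingHom.injective_int _) this

theorem aeval_inv_const {S T : Polynomial ℤ}
    (h : Polynomial.aeval q S = Polynomial.aeval q⁻¹ T) : S.natDegree = 0 := by
  by_cases hS : S = 0
  · simp [hS]
  have hq := q_ne_zero
  let _ : Invertible (q⁻¹ : K) := invertibleOfNonzero (inv_ne_zero hq)
  have h1 := Polynomial.eval₂_reverse_mul_pow (Int.castRingHom K) (q⁻¹) T
  have h2 : Polynomial.aeval q (T.reverse) = q ^ T.natDegree * Polynomial.aeval q S := by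
    rw [h, Polynomial.aeval_def, Polynomial.aeval_def]
    have hZ : algebraMap ℤ K = Int.castRingHom K := RingHom.ext_int _ _
    rw [hZ]
    rw [← h1, invOf_eq_inv, inv_inv, inv_pow]
    field_simp
  have h3 : T.reverse = Polynomial.X ^ T.natDegree * S := by
    apply aeval_q_injective
    simp only [map_mul, map_pow, Polynomial.aeval_X]
    exact h2
  have h4 := Polynomial.reverse_natDegree_le T
  rw [h3, Polynomial.natDegree_mul (pow_ne_zero _ Polynomial.X_ne_zero) hS,
    Polynomial.natDegree_X_pow] at h4
  omega

theorem bar_aeval (b : K →+* K) (x : K) (p : Polynomial ℤ) :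
    b (Polynomial.aeval x p) = Polynomial.aeval (b x) p := by
  rw [Polynomial.aeval_def, Polynomial.aeval_def, Polynomial.hom_eval₂]
  congr 1
  exact RingHom.ext_int _ _

theorem AA_decomp {r : K} (hr : r ∈ AA) : ∃ (c : ℤ) (S T : Polynomial ℤ),
    r = c + q * Polynomial.aeval q S + q⁻¹ * Polynomial.aeval q⁻¹ T := by
  have hq := q_ne_zero
  rw [AA, Subring.mem_closure_iff] at hr
  induction hr using AddSubgroup.closure_induction with
  | mem x hx =>
    have : ∃ z : ℤ, x = q ^ z := by
      induction hx using Submonoid.closure_induction with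
      | mem x hx => obtain ⟨z, rfl⟩ := hx; exact ⟨z, rfl⟩
      | one => exact ⟨0, by simp⟩
      | mul x y _ _ hx hy =>
        obtain ⟨z, rfl⟩ := hx
        obtain ⟨w, rfl⟩ := hy
        exact ⟨z + w, (zpow_add₀ hq _ _).symm⟩
    obtain ⟨z, rfl⟩ := this
    rcases lt_trichotomy z 0 with hz | hz | hz
    · obtain ⟨n, hn⟩ : ∃ n : ℕ, z = -((n : ℤ) + 1) := ⟨(-z - 1).toNat, by omega⟩
      refine ⟨0, 0, Polynomial.X ^ n, ?_⟩
      rw [hn, zpow_neg, zpow_add₀ hq]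
      simp
    · exact ⟨1, 0, 0, by simp [hz]⟩
    · obtain ⟨n, hn⟩ : ∃ n : ℕ, z = (n : ℤ) + 1 := ⟨(z - 1).toNat, by omega⟩
      refine ⟨0, Polynomial.X ^ n, 0, ?_⟩
      rw [hn, zpow_add₀ hq]
      simp
      ring
  | zero => exact ⟨0, 0, 0, by simp⟩
  | add x y _ _ hx hy =>
    obtain ⟨c, S, T, rfl⟩ := hx
    obtain ⟨c', S', T', rfl⟩ := hy
    refine ⟨c + c', S + S', T + T', ?_⟩
    rw [map_add, map_add, Int.cast_add]
    ring
  | neg x _ hx =>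
    obtain ⟨c, S, T, rfl⟩ := hx
    refine ⟨-c, -S, -T, ?_⟩
    rw [map_neg, map_neg, Int.cast_neg]
    ring

theorem X_mul_natDegree {S : Polynomial ℤ} (h : (Polynomial.C c + Polynomial.X * S).natDegree = 0) :
    S = 0 := by
  by_contra hS
  have h1 := Polynomial.eq_C_of_natDegree_eq_zero h
  have h2 := congrArg (fun p => Polynomial.coeff p (S.natDegree + 1)) h1
  simp [Polynomial.coeff_X_mul, Polynomial.coeff_C] at h2
  exact hS h2

theorem bar_invariant_zero (b : K →+* K) (hb : b q = q⁻¹) (S : Polynomial ℤ)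
    (h : b (q * Polynomial.aeval q S) = q * Polynomial.aeval q S) : S = 0 := by
  apply X_mul_natDegree (c := 0)
  apply aeval_inv_const (T := Polynomial.X * S)
  rw [map_mul, bar_aeval, hb] at h
  simp [h]

theorem bar_anti (b : K →+* K) (hb : b q = q⁻¹) {r : K} (hr : r ∈ AA) (h : b r = -r) :
    ∃ S : Polynomial ℤ, r = q * Polynomial.aeval q S - b (q * Polynomial.aeval q S) := by
  obtain ⟨c, S, T, rfl⟩ := AA_decomp hr
  refine ⟨S, ?_⟩
  rw [map_add, map_add, map_mul, map_mul, bar_aeval, bar_aeval, map_intCast, map_inv₀, hb,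
    inv_inv] at h
  rw [map_mul, bar_aeval, hb]
  have h2 : S + T = 0 := by
    apply X_mul_natDegree (c := 2 * c)
    apply aeval_inv_const (T := - (Polynomial.X * (S + T)))
    have hC : Polynomial.aeval q (Polynomial.C (2 * c)) = (2 : K) * (c : K) := by
      rw [Polynomial.aeval_C, eq_intCast, Int.cast_mul, Int.cast_ofNat]
    rw [map_add, hC]
    simp only [map_add, map_mul, Polynomial.aeval_X, map_neg]
    linear_combination h
  have h3 : T = -S := by
    rw [← add_eq_zero_iff_eq_neg, add_comm, h2]
  subst h3
  simp only [map_neg] at h ⊢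
  have hc : (c : K) = 0 := by
    have : (2 : K) * c = 0 := by linear_combination h
    exact (mul_eq_zero.mp this).resolve_left two_ne_zero
  rw [hc]
  ring

/-! ### The abstract existence and uniqueness argument -/

theorem eb_self {n : ℕ} (γ : Fin n → Fin 2) : eb γ γ = 1 := by simp [eb]

theorem eb_ne {n : ℕ} {γ δ : Fin n → Fin 2} (h : γ ≠ δ) : eb δ γ = 0 := by simp [eb, h]

theorem V_expand {n : ℕ} (f : V n) : f = ∑ γ, f γ • eb γ := by
  funext δ
  simp [Finset.sum_apply, eb]

section abstractKL

variable {n : ℕ} (b : K →+* K) (ψ : V n → V n) (rk : (Fin n → Fin 2) → ℕ)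
  (rel : (Fin n → Fin 2) → (Fin n → Fin 2) → Prop)

theorem psi_sum (b : K →+* K) (ψ : V n → V n)
    (hadd : ∀ f g, ψ (f + g) = ψ f + ψ g) (hsmul : ∀ c f, ψ (c • f) = b c • ψ f) (f : V n) :
    ψ f = ∑ γ, b (f γ) • ψ (eb γ) := by
  conv_lhs => rw [V_expand f]
  have : ∀ s : Finset (Fin n → Fin 2),
      ψ (∑ γ ∈ s, f γ • eb γ) = ∑ γ ∈ s, b (f γ) • ψ (eb γ) := by
    intro s
    induction s using Finset.induction_on with
    | empty => simpa using hsmul 0 0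
    | insert x s hx ih => rw [Finset.sum_insert hx, Finset.sum_insert hx, hadd, hsmul, ih]
  exact this _

/-- The coefficient of `ψ f` at an element of maximal rank of the support. -/
theorem psi_top (b : K →+* K) (ψ : V n → V n) (rk : (Fin n → Fin 2) → ℕ)
    (hadd : ∀ f g, ψ (f + g) = ψ f + ψ g) (hsmul : ∀ c f, ψ (c • f) = b c • ψ f)
    (hdiag : ∀ γ, ψ (eb γ) γ = 1)
    (hrk : ∀ γ δ, γ ≠ δ → ψ (eb δ) γ ≠ 0 → rk γ < rk δ)
    (f : V n) (γ : Fin n → Fin 2) (hmax : ∀ δ, f δ ≠ 0 → rk δ ≤ rk γ) :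
    ψ f γ = b (f γ) := by
  rw [psi_sum b ψ hadd hsmul f, Finset.sum_apply, Finset.sum_eq_single γ]
  · simp [hdiag]
  · intro δ _ hδ
    by_cases h : f δ = 0
    · simp [h]
    · have : ψ (eb δ) γ = 0 := by
        by_contra h2
        have h3 := hrk γ δ (Ne.symm hδ) h2
        have h4 := hmax δ h
        omega
      simp [this]
  · intro h
    exact absurd (Finset.mem_univ γ) h

theorem KL_unique (b : K →+* K) (hb : b q = q⁻¹) (ψ : V n → V n) (rk : (Fin n → Fin 2) → ℕ)
    (hadd : ∀ f g, ψ (f + g) = ψ f + ψ g) (hsmul : ∀ c f, ψ (c • f) = b c • ψ f)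
    (hdiag : ∀ γ, ψ (eb γ) γ = 1)
    (hrk : ∀ γ δ, γ ≠ δ → ψ (eb δ) γ ≠ 0 → rk γ < rk δ)
    (x : V n) (hx : ψ x = x) (hR : ∀ γ, ∃ S : Polynomial ℤ, x γ = q * Polynomial.aeval q S) :
    x = 0 := by
  by_contra hne
  have hs : (Finset.univ.filter fun γ => x γ ≠ 0).Nonempty := by
    by_contra h
    rw [Finset.not_nonempty_iff_eq_empty] at h
    apply hne
    funext γ
    by_contra h2
    have : γ ∈ (Finset.univ.filter fun γ => x γ ≠ 0) := by simpa using h2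
    rw [h] at this
    simp at this
  obtain ⟨γ, hγ, hmax⟩ := Finset.exists_max_image _ rk hs
  have h1 := psi_top b ψ rk hadd hsmul hdiag hrk x γ (fun δ hδ => hmax δ (by simpa using hδ))
  rw [hx] at h1
  obtain ⟨S, hS⟩ := hR γ
  rw [hS] at h1
  have := bar_invariant_zero b hb S h1.symm
  rw [this] at hS
  simp only [Finset.mem_filter] at hγ
  apply hγ.2
  rw [hS]
  simp

theorem KL_exists (b : K →+* K) (hb : b q = q⁻¹) (ψ : V n → V n) (rk : (Fin n → Fin 2) → ℕ)
    (rel : (Fin n → Fin 2) → (Fin n → Fin 2) → Prop)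
    (hadd : ∀ f g, ψ (f + g) = ψ f + ψ g) (hsmul : ∀ c f, ψ (c • f) = b c • ψ f)
    (hdiag : ∀ γ, ψ (eb γ) γ = 1) (hinv : ∀ f, ψ (ψ f) = f)
    (hrel : ∀ γ δ, γ ≠ δ → ψ (eb δ) γ ≠ 0 → rel γ δ)
    (hrk : ∀ γ δ, rel γ δ → rk γ < rk δ)
    (hAA : ∀ γ δ, ψ (eb δ) γ ∈ AA) :
    ∀ (N : ℕ) (s : Finset (Fin n → Fin 2)), s.card = N →
      (∀ γ δ, rel γ δ → δ ∈ s → γ ∈ s) → ∀ x : V n, (∀ γ, x γ ∈ AA) → (∀ γ, x γ ≠ 0 → γ ∈ s) →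
      ψ x = -x → ∃ y : V n, x = y - ψ y ∧ ∀ γ, ∃ S : Polynomial ℤ,
        y γ = q * Polynomial.aeval q S ∧ (γ ∉ s → S = 0) := by
  intro N
  have hneg : ∀ f, ψ (-f) = - ψ f := by
    intro f
    have := hsmul (-1) f
    simpa using this
  have hsub : ∀ f g, ψ (f - g) = ψ f - ψ g := by
    intro f g
    rw [sub_eq_add_neg, hadd, hneg, sub_eq_add_neg]
  induction N with
  | zero =>
    intro s hs _ x _ hsupp _
    have hx : x = 0 := by
      funext γ
      by_contra h
      have := hsupp γ h
      rw [Finset.card_eq_zero.mp hs] at this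
      simp at this
    have h0 : ψ 0 = 0 := by simpa using hsmul 0 0
    refine ⟨0, by rw [hx, h0, sub_zero], fun γ => ⟨0, by simp, fun _ => rfl⟩⟩
  | succ N ih =>
    intro s hs hlow x hxA hsupp hanti
    have hne : s.Nonempty := by
      rw [← Finset.card_pos]; omega
    obtain ⟨γ, hγ, hmax⟩ := Finset.exists_max_image s rk hne
    have h1 : ψ x γ = b (x γ) := psi_top b ψ rk hadd hsmul hdiag
      (fun γ δ h h' => hrk γ δ (hrel γ δ h h')) x γ (fun δ hδ => hmax δ (hsupp δ hδ))
    rw [hanti] at h1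
    obtain ⟨S, hS⟩ := bar_anti b hb (hxA γ) h1.symm
    set c : K := q * Polynomial.aeval q S with hc
    have hcA : c ∈ AA := AA.mul_mem q_mem_AA (aeval_mem_AA q_mem_AA S)
    have hbcA : b c ∈ AA := by
      rw [hc, map_mul, bar_aeval, hb]
      exact AA.mul_mem qinv_mem_AA (aeval_mem_AA qinv_mem_AA S)
    have hval : ∀ δ, (x - c • eb γ + ψ (c • eb γ)) δ =
        x δ - c * eb γ δ + b c * ψ (eb γ) δ := by
      intro δ
      rw [hsmul]
      rfl
    obtain ⟨y, hy, hyS⟩ := ih (s.erase γ) (by rw [Finset.card_erase_of_mem hγ]; omega)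
      (by
        intro α β hαβ hβ
        rw [Finset.mem_erase] at hβ ⊢
        refine ⟨?_, hlow α β hαβ hβ.2⟩
        rintro rfl
        have h3 := hrk _ _ hαβ
        have h4 := hmax β hβ.2
        omega)
      (x - c • eb γ + ψ (c • eb γ))
      (by
        intro δ
        rw [hval]
        refine AA.add_mem (AA.sub_mem (hxA δ) (AA.mul_mem hcA ?_)) (AA.mul_mem hbcA (hAA _ _))
        unfold eb
        split_ifs
        · exact AA.one_mem
        · exact AA.zero_mem)
      (by
        intro δ hδ
        rw [hval] at hδ
        have hδγ : δ ≠ γ := by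
          rintro rfl
          apply hδ
          rw [hdiag, eb_self, hS]
          ring
        rw [Finset.mem_erase]
        refine ⟨hδγ, ?_⟩
        by_contra hns
        apply hδ
        have h5 : x δ = 0 := by
          by_contra h; exact hns (hsupp δ h)
        have h6 : ψ (eb γ) δ = 0 := by
          by_contra h; exact hns (hlow _ _ (hrel δ γ hδγ h) hγ)
        rw [h5, h6, eb_ne hδγ]
        ring)
      (by
        rw [hadd, hsub, hinv, hanti]
        abel)
    refine ⟨y + c • eb γ, ?_, ?_⟩
    · rw [hadd]
      have : x = (x - c • eb γ + ψ (c • eb γ)) + c • eb γ - ψ (c • eb γ) := by abel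
      rw [this, hy]
      abel
    · intro δ
      by_cases hδ : δ = γ
      · subst hδ
        obtain ⟨S', hS', _⟩ := hyS δ
        refine ⟨S' + S, ?_, fun h => absurd hγ h⟩
        rw [Pi.add_apply, Pi.smul_apply, eb_self, hS', hc, map_add, smul_eq_mul]
        ring
      · obtain ⟨S', hS', h0⟩ := hyS δ
        refine ⟨S', ?_, fun h => h0 (fun h' => h (Finset.mem_of_mem_erase h'))⟩
        rw [Pi.add_apply, Pi.smul_apply, eb_ne hδ, hS', smul_eq_mul]
        ring

end abstractKL

/-! ### Prefix sums and triangularity -/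

/-- Extension of a sequence by zero. -/
def ext0 {n : ℕ} (η : Fin n → Fin 2) (j : ℕ) : ℕ := if h : j < n then (η ⟨j, h⟩ : ℕ) else 0

/-- The number of ones among the first `m` entries. -/
def pre {n : ℕ} (η : Fin n → Fin 2) (m : ℕ) : ℕ := ∑ j ∈ Finset.range m, ext0 η j

/-- The sum of all prefix counts. -/
def rkk {n : ℕ} (η : Fin n → Fin 2) : ℕ := ∑ m ∈ Finset.range (n + 1), pre η m

theorem pre_succ {n : ℕ} (η : Fin n → Fin 2) (m : ℕ) : pre η (m + 1) = pre η m + ext0 η m :=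
  Finset.sum_range_succ _ _

theorem ext0_le {n : ℕ} (η : Fin n → Fin 2) (m : ℕ) : ext0 η m ≤ 1 := by
  unfold ext0
  split_ifs <;> omega

theorem ext0_coe {n : ℕ} (η : Fin n → Fin 2) (i : Fin n) : ext0 η i = (η i : ℕ) := by
  simp [ext0]

theorem pre_of_le {n : ℕ} (η : Fin n → Fin 2) {m : ℕ} (h : n ≤ m) : pre η m = pre η n := by
  induction m, h using Nat.le_induction with
  | base => rfl
  | succ m hm ih =>
    rw [pre_succ, ih]
    simp [ext0, Nat.not_lt.mpr hm]

theorem pre_inj {n : ℕ} {γ η : Fin n → Fin 2} (h : ∀ m, m ≤ n → pre γ m = pre η m) : γ = η := by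
  funext i
  have h1 := h (i + 1) (by omega)
  have h2 := h i (by omega)
  rw [pre_succ, pre_succ, ext0_coe, ext0_coe] at h1
  omega

theorem ext0_snoc {n : ℕ} (δ : Fin n → Fin 2) (x : Fin 2) (j : ℕ) :
    ext0 (Fin.snoc δ x : Fin (n + 1) → Fin 2) j = ext0 δ j + if j = n then (x : ℕ) else 0 := by
  unfold ext0
  rcases lt_trichotomy j n with h | h | h
  · have : (⟨j, by omega⟩ : Fin (n + 1)) = Fin.castSucc ⟨j, h⟩ := rfl
    rw [dif_pos (by omega), dif_pos h, if_neg (by omega), this, Fin.snoc_castSucc]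
    rfl
  · subst h
    have : (⟨j, by omega⟩ : Fin (j + 1)) = Fin.last j := rfl
    rw [dif_pos (by omega), dif_neg (by omega), if_pos rfl, this, Fin.snoc_last]
    simp
  · rw [dif_neg (by omega), dif_neg (by omega), if_neg (by omega)]

theorem pre_snoc {n : ℕ} (δ : Fin n → Fin 2) (x : Fin 2) (m : ℕ) :
    pre (Fin.snoc δ x : Fin (n + 1) → Fin 2) m = pre δ m + if n < m then (x : ℕ) else 0 := by
  unfold pre
  simp only [ext0_snoc, Finset.sum_add_distrib]
  congr 1
  rw [Finset.sum_ite_eq']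
  simp

theorem ext0_update {n : ℕ} (δ : Fin n → Fin 2) (i : Fin n) (h : δ i = 0) (j : ℕ) :
    ext0 (Function.update δ i 1) j = ext0 δ j + if j = i then 1 else 0 := by
  by_cases hj : j < n
  · obtain ⟨j', rfl⟩ : ∃ j' : Fin n, j = j' := ⟨⟨j, hj⟩, rfl⟩
    rw [ext0_coe, ext0_coe]
    by_cases hij : j' = i
    · subst hij
      simp [h]
    · rw [Function.update_of_ne hij, if_neg (fun h => hij (Fin.ext h))]
      rfl
  · unfold ext0
    rw [dif_neg hj, dif_neg hj, if_neg (by omega)]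

theorem pre_update {n : ℕ} (δ : Fin n → Fin 2) (i : Fin n) (h : δ i = 0) (m : ℕ) :
    pre (Function.update δ i 1) m = pre δ m + if (i : ℕ) < m then 1 else 0 := by
  unfold pre
  simp only [ext0_update δ i h, Finset.sum_add_distrib]
  congr 1
  rw [Finset.sum_ite_eq']
  simp

/-- Dominance order within a weight space. -/
def domLE {n : ℕ} (γ η : Fin n → Fin 2) : Prop := (∀ m, pre γ m ≤ pre η m) ∧ pre γ n = pre η n

/-- Strict dominance order. -/
def domLT {n : ℕ} (γ η : Fin n → Fin 2) : Prop := domLE γ η ∧ γ ≠ η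

theorem Eop_supp (a : ℕ → ℕ) (m : ℕ) (f : V m) (γ : Fin m → Fin 2) (h : Eop a m f γ ≠ 0) :
    ∃ i, γ i = 0 ∧ f (Function.update γ i 1) ≠ 0 := by
  by_contra! hc
  apply h
  simp only [Eop, LinearMap.coe_mk, AddHom.coe_mk]
  refine Finset.sum_eq_zero fun i _ => ?_
  split_ifs with h0
  · rw [hc i h0, mul_zero]
  · rfl

theorem snoc_cases {m : ℕ} (γ : Fin (m + 1) → Fin 2) :
    ∃ δ : Fin m → Fin 2, γ = Fin.snoc δ 0 ∨ γ = Fin.snoc δ 1 := by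
  refine ⟨Fin.init γ, ?_⟩
  have hγ : Fin.snoc (Fin.init γ) (γ (Fin.last m)) = γ := Fin.snoc_init_self γ
  have hx : γ (Fin.last m) = 0 ∨ γ (Fin.last m) = 1 := by omega
  rcases hx with h | h
  · left; rw [h] at hγ; exact hγ.symm
  · right; rw [h] at hγ; exact hγ.symm

theorem barV_supp (a : ℕ → ℕ) : ∀ (m : ℕ) (f : V m) (B : ℕ → ℤ) (w : ℤ),
    (∀ γ, f γ ≠ 0 → (∀ j, (pre γ j : ℤ) ≤ B j) ∧ (pre γ m : ℤ) = w) →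
    ∀ γ, barV a m f γ ≠ 0 → (∀ j, (pre γ j : ℤ) ≤ B j) ∧ (pre γ m : ℤ) = w
  | 0, f, B, w, hf, γ, hγ => hf γ hγ
  | m + 1, f, B, w, hf, γ, hγ => by
    have ih0 : ∀ δ, barV a m (lastComp 0 f) δ ≠ 0 →
        (∀ j, (pre δ j : ℤ) ≤ B j) ∧ (pre δ m : ℤ) = w := by
      apply barV_supp a m
      intro δ hδ
      have h := hf _ hδ
      simp only [pre_snoc] at h
      rw [pre_of_le δ (Nat.le_succ m)] at h
      simpa using h
    have ih1 : ∀ δ, barV a m (lastComp 1 f) δ ≠ 0 →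
        (∀ j, (pre δ j : ℤ) ≤ B j - if m < j then 1 else 0) ∧ (pre δ m : ℤ) = w - 1 := by
      apply barV_supp a m
      intro δ hδ
      have h := hf _ hδ
      simp only [pre_snoc] at h
      rw [pre_of_le δ (Nat.le_succ m)] at h
      refine ⟨fun j => ?_, ?_⟩
      · have := h.1 j
        split_ifs at this ⊢ <;> simp at this ⊢ <;> linarith
      · have := h.2
        simp at this
        linarith
    obtain ⟨δ, rfl | rfl⟩ := snoc_cases γ
    · change lastComp 0 (barV a (m + 1) f) δ ≠ 0 at hγ
      rw [lastComp0_barV] at hγ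
      have h := ih0 δ hγ
      simp only [pre_snoc]
      rw [pre_of_le δ (Nat.le_succ m)]
      simpa using h
    · change lastComp 1 (barV a (m + 1) f) δ ≠ 0 at hγ
      rw [lastComp1_barV] at hγ
      simp only [pre_snoc]
      rw [pre_of_le δ (Nat.le_succ m)]
      by_cases h1 : barV a m (lastComp 1 f) δ = 0
      · have h2 : Eop a m (twist (barV a m (lastComp 0 f))) δ ≠ 0 := by
          intro h3
          apply hγ
          rw [Pi.add_apply, Pi.smul_apply, h1, h3]
          simp
        obtain ⟨i, hi0, hi⟩ := Eop_supp a m _ δ h2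
        have hi' : barV a m (lastComp 0 f) (Function.update δ i 1) ≠ 0 := by
          intro h
          apply hi
          rw [twist, h, mul_zero]
        have h := ih0 _ hi'
        simp only [pre_update δ i hi0] at h
        have him := i.isLt
        refine ⟨fun j => ?_, ?_⟩
        · have := h.1 j
          split_ifs at this ⊢ <;> simp at this ⊢ <;> linarith
        · have := h.2
          simp [him] at this ⊢
          linarith
      · have h := ih1 δ h1
        refine ⟨fun j => ?_, ?_⟩
        · have := h.1 j
          split_ifs at this ⊢ <;> simp at this ⊢ <;> linarith
        · have := h.2
          simp
          linarith

theorem Eop_AA (a : ℕ → ℕ) (m : ℕ) (f : V m) (hf : ∀ γ, f γ ∈ AA) (γ : Fin m → Fin 2) :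
    Eop a m f γ ∈ AA := by
  simp only [Eop, LinearMap.coe_mk, AddHom.coe_mk]
  refine AA.sum_mem fun i _ => ?_
  split_ifs
  · refine AA.mul_mem (AA.mul_mem (AA.mul_mem (AA.pow_mem (AA.neg_mem AA.one_mem) _) ?_) ?_) (hf _)
    · exact qnum_mem_AA _
    · exact zpow_mem_AA _
  · exact AA.zero_mem

theorem barV_AA (a : ℕ → ℕ) : ∀ (m : ℕ) (f : V m), (∀ γ, f γ ∈ AA) → ∀ γ, barV a m f γ ∈ AA
  | 0, f, hf, γ => hf γ
  | m + 1, f, hf, γ => by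
    have ih0 := barV_AA a m (lastComp 0 f) (fun δ => hf _)
    have ih1 := barV_AA a m (lastComp 1 f) (fun δ => hf _)
    obtain ⟨δ, rfl | rfl⟩ := snoc_cases γ
    · change lastComp 0 (barV a (m + 1) f) δ ∈ AA
      rw [lastComp0_barV]
      exact ih0 δ
    · change lastComp 1 (barV a (m + 1) f) δ ∈ AA
      rw [lastComp1_barV]
      refine AA.add_mem (ih1 δ) (AA.mul_mem (AA.sub_mem qinv_mem_AA q_mem_AA) ?_)
      apply Eop_AA
      intro ε
      exact AA.mul_mem (AA.pow_mem (AA.neg_mem AA.one_mem) _) (ih0 ε)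

theorem lastComp_eb {m : ℕ} (δ : Fin m → Fin 2) (x : Fin 2) :
    lastComp x (eb (Fin.snoc δ x)) = eb δ := by
  funext ε
  simp only [lastComp, eb]
  congr 1
  rw [Fin.snoc_inj]
  simp

theorem lastComp_eb_ne {m : ℕ} (δ : Fin m → Fin 2) {x y : Fin 2} (h : y ≠ x) :
    lastComp y (eb (Fin.snoc δ x)) = 0 := by
  funext ε
  simp only [lastComp, eb]
  rw [if_neg]
  · rfl
  · rw [Fin.snoc_inj]
    exact fun h' => h h'.2

theorem barV_diag (a : ℕ → ℕ) : ∀ (m : ℕ) (γ : Fin m → Fin 2), barV a m (eb γ) γ = 1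
  | 0, γ => eb_self γ
  | m + 1, γ => by
    obtain ⟨δ, rfl | rfl⟩ := snoc_cases γ
    · change lastComp 0 (barV a (m + 1) _) δ = 1
      rw [lastComp0_barV, lastComp_eb, barV_diag a m]
    · change lastComp 1 (barV a (m + 1) _) δ = 1
      rw [lastComp1_barV, lastComp_eb, lastComp_eb_ne δ (by decide), barV_zero]
      have : twist (0 : V m) = 0 := by
        funext ε
        simp [twist]
      rw [this, map_zero, smul_zero, add_zero, barV_diag a m]

theorem barSemi_eb (b : K →+* K) (a : ℕ → ℕ) (m : ℕ) (γ : Fin m → Fin 2) :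
    barSemi b a m (eb γ) = barV a m (eb γ) := by
  unfold barSemi
  congr 1
  funext δ
  unfold eb
  split_ifs <;> simp

theorem barV_domLE (a : ℕ → ℕ) (m : ℕ) (γ δ : Fin m → Fin 2) (h : barV a m (eb δ) γ ≠ 0) :
    domLE γ δ := by
  have := barV_supp a m (eb δ) (fun j => (pre δ j : ℤ)) (pre δ m) (by
    intro ε hε
    have : ε = δ := by
      by_contra hne
      exact hε (eb_ne hne)
    subst this
    exact ⟨fun _ => le_rfl, rfl⟩) γ h
  exact ⟨fun j => by exact_mod_cast this.1 j, by exact_mod_cast this.2⟩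

theorem domLE_trans {n : ℕ} {α β γ : Fin n → Fin 2} (h : domLE α β) (h' : domLE β γ) :
    domLE α γ := ⟨fun m => (h.1 m).trans (h'.1 m), h.2.trans h'.2⟩

theorem domLE_antisymm {n : ℕ} {α β : Fin n → Fin 2} (h : domLE α β) (h' : domLE β α) :
    α = β := pre_inj fun m _ => le_antisymm (h.1 m) (h'.1 m)

theorem domLT_trans {n : ℕ} {α β γ : Fin n → Fin 2} (h : domLT α β) (h' : domLT β γ) :
    domLT α γ := by
  refine ⟨domLE_trans h.1 h'.1, ?_⟩
  rintro rfl
  exact h.2 (domLE_antisymm h.1 h'.1)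

theorem rkk_lt {n : ℕ} {γ η : Fin n → Fin 2} (h : domLT γ η) : rkk γ < rkk η := by
  unfold rkk
  apply Finset.sum_lt_sum
  · intro m _
    exact h.1.1 m
  · by_contra! hc
    apply h.2
    apply pre_inj
    intro m hm
    exact le_antisymm (h.1.1 m) (hc m (Finset.mem_range.mpr (by omega)))

/-! ### Dominance implies the Bruhat order -/

theorem ext0_swap {n : ℕ} (η : Fin n → Fin 2) (i : Fin (n - 1)) (j : ℕ) :
    ext0 (fun x => η (s n i x)) j =
      if j = i then ext0 η (i + 1) else if j = i + 1 then ext0 η i else ext0 η j := by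
  have hi := i.isLt
  by_cases hj : j < n
  · have h1 : (i : ℕ) < n := by omega
    have h2 : (i : ℕ) + 1 < n := by omega
    unfold ext0
    rw [dif_pos hj, dif_pos h1, dif_pos h2, dif_pos hj]
    unfold s
    beta_reduce
    by_cases hji : j = i
    · subst hji
      rw [if_pos rfl, Equiv.swap_apply_left]
    · by_cases hji' : j = i + 1
      · subst hji'
        rw [if_neg hji, if_pos rfl, Equiv.swap_apply_right]
      · rw [if_neg hji, if_neg hji', Equiv.swap_apply_of_ne_of_ne]
        · intro h; exact hji (congrArg Fin.val h)
        · intro h; exact hji' (congrArg Fin.val h)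
  · rw [if_neg (by omega), if_neg (by omega)]
    unfold ext0
    rw [dif_neg hj, dif_neg hj]

theorem pre_swap {n : ℕ} (η : Fin n → Fin 2) (i : Fin (n - 1)) (m : ℕ) :
    pre (fun x => η (s n i x)) m =
      if m = i + 1 then pre η i + ext0 η (i + 1) else pre η m := by
  have hlow : ∀ m, m ≤ (i : ℕ) → pre (fun x => η (s n i x)) m = pre η m := by
    intro m hm
    unfold pre
    refine Finset.sum_congr rfl fun j hj => ?_
    have := Finset.mem_range.mp hj
    rw [ext0_swap, if_neg (by omega), if_neg (by omega)]
  have hmid : pre (fun x => η (s n i x)) (i + 1) = pre η i + ext0 η (i + 1) := by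
    rw [pre_succ, hlow _ le_rfl, ext0_swap, if_pos rfl]
  have hhigh : ∀ m, (i : ℕ) + 2 ≤ m → pre (fun x => η (s n i x)) m = pre η m := by
    intro m hm
    induction m, hm using Nat.le_induction with
    | base =>
      rw [pre_succ, hmid, ext0_swap, if_neg (by omega), if_pos rfl, pre_succ η (i + 1),
        pre_succ η i]
      omega
    | succ m hm ih =>
      rw [pre_succ, ih, ext0_swap, if_neg (by omega), if_neg (by omega), pre_succ]
  split_ifs with h
  · rw [h, hmid]
  · rcases Nat.lt_or_ge m (i + 1) with h' | h'
    · exact hlow m (by omega)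
    · exact hhigh m (by omega)

theorem rkk_swap {n : ℕ} (η : Fin n → Fin 2) (i : Fin (n - 1)) :
    rkk (fun x => η (s n i x)) + ext0 η i = rkk η + ext0 η (i + 1) := by
  have hi := i.isLt
  have hmem : (i : ℕ) + 1 ∈ Finset.range (n + 1) := Finset.mem_range.mpr (by omega)
  unfold rkk
  rw [← Finset.add_sum_erase _ _ hmem, ← Finset.add_sum_erase _ (fun m => pre η m) hmem]
  have : ∑ x ∈ (Finset.range (n + 1)).erase (i + 1), pre (fun x => η (s n i x)) x
      = ∑ x ∈ (Finset.range (n + 1)).erase (i + 1), pre η x := by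
    refine Finset.sum_congr rfl fun m hm => ?_
    rw [pre_swap, if_neg (Finset.ne_of_mem_erase hm)]
  rw [this, pre_swap, if_pos rfl]
  simp only [pre_succ]
  omega

theorem wordProd_append (n : ℕ) (t : List (Fin (n - 1))) (i : Fin (n - 1)) :
    wordProd n (t ++ [i]) = wordProd n t * s n i := by
  simp [wordProd]

theorem rkk_word_le (n k : ℕ) (t : List (Fin (n - 1))) :
    rkk (fun x => etaMin n k (wordProd n t x)) ≤ rkk (etaMin n k) + t.length := by
  induction t using List.reverseRecOn with
  | nil => simp [wordProd]
  | append_singleton t i ih =>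
    rw [wordProd_append]
    have h := rkk_swap (fun x => etaMin n k (wordProd n t x)) i
    have h2 := ext0_le (fun x => etaMin n k (wordProd n t x)) (i + 1)
    have h3 : (fun x => etaMin n k ((wordProd n t * s n i) x)) =
      (fun x => (fun y => etaMin n k (wordProd n t y)) (s n i x)) := rfl
    rw [h3, List.length_append, List.length_singleton]
    beta_reduce at h ⊢
    omega

theorem pre_add_zeros {n : ℕ} (η : Fin n → Fin 2) : pre η n + zeros η = n := by
  have h1 : pre η n = ∑ i : Fin n, (η i : ℕ) := by
    unfold pre
    rw [← Fin.sum_univ_eq_sum_range]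
    exact Finset.sum_congr rfl fun i _ => ext0_coe η i
  have h2 : zeros η = ∑ i : Fin n, (1 - (η i : ℕ)) := by
    unfold zeros
    rw [Finset.card_filter]
    refine Finset.sum_congr rfl fun i _ => ?_
    split_ifs with h
    · simp [h]
    · have : (η i : ℕ) ≠ 0 := fun h' => h (Fin.ext h')
      omega
  rw [h1, h2, ← Finset.sum_add_distrib]
  have : ∀ i : Fin n, (η i : ℕ) + (1 - (η i : ℕ)) = 1 := by
    intro i
    omega
  simp [this]

theorem no_descent {n : ℕ} (η : Fin n → Fin 2)
    (h : ∀ i : ℕ, i + 1 < n → ext0 η i = 1 → ext0 η (i + 1) = 1) :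
    η = etaMin n (zeros η) := by
  have key : ∀ m, m ≤ n → ∃ j ≤ m, ∀ i, i < m → (ext0 η i = 0 ↔ i < j) := by
    intro m
    induction m with
    | zero => intro _; exact ⟨0, le_rfl, fun i hi => absurd hi (by omega)⟩
    | succ m ih =>
      intro hm
      obtain ⟨j, hj, hjm⟩ := ih (by omega)
      have hle := ext0_le η m
      by_cases h0 : ext0 η m = 0
      · have hjm' : j = m := by
          by_contra hne
          have h1 := hjm (m - 1) (by omega)
          have h2 := ext0_le η (m - 1)
          have h3 := h (m - 1) (by omega) (by
            have : ¬ (m - 1 < j) := by omega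
            have : ¬ ext0 η (m - 1) = 0 := fun hh => this (h1.mp hh)
            omega)
          rw [Nat.sub_add_cancel (by omega)] at h3
          omega
        refine ⟨m + 1, le_rfl, fun i hi => ⟨fun _ => hi, fun _ => ?_⟩⟩
        rcases Nat.lt_or_ge i m with hi' | hi'
        · exact (hjm i hi').mpr (by omega)
        · rw [show i = m by omega]; exact h0
      · refine ⟨j, by omega, fun i hi => ?_⟩
        rcases Nat.lt_or_ge i m with hi' | hi'
        · exact hjm i hi'
        · rw [show i = m by omega]
          exact ⟨fun hh => absurd hh h0, fun hh => absurd hh (by omega)⟩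
  obtain ⟨j, hj, hη⟩ := key n le_rfl
  have hEq : η = etaMin n j := by
    funext i
    have h1 := hη i i.isLt
    rw [ext0_coe] at h1
    unfold etaMin
    split_ifs with h2
    · exact Fin.ext (h1.mpr h2)
    · have : ¬ (η i : ℕ) = 0 := fun hh => h2 (h1.mp hh)
      omega
  have hz : zeros η = j := by
    unfold zeros
    have : (Finset.univ.filter fun i => η i = 0) = Finset.univ.filter fun i : Fin n => (i : ℕ) < j := by
      ext i
      rw [Finset.mem_filter, Finset.mem_filter, hEq]
      unfold etaMin
      split_ifs with h2 <;> simp [h2]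
    rw [this, Fin.card_filter_val_lt]
    omega
  rw [hz]
  exact hEq

theorem pre_lower {n : ℕ} (η : Fin n → Fin 2) (m d : ℕ) : pre η (m + d) ≤ pre η m + d := by
  induction d with
  | zero => simp
  | succ d ih =>
    have := ext0_le η (m + d)
    rw [← Nat.add_assoc, pre_succ]
    omega

theorem pre_etaMin (n k m : ℕ) (hm : m ≤ n) : pre (etaMin n k) m = m - k := by
  induction m with
  | zero => simp [pre]
  | succ m ih =>
    rw [pre_succ, ih (by omega)]
    unfold ext0 etaMin
    rw [dif_pos (by omega)]
    by_cases h : m < k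
    · simp [h]; omega
    · simp [h]; omega

theorem exists_words {n k : ℕ} : ∀ (N : ℕ) (γ η : Fin n → Fin 2), rkk η = N → domLE γ η →
    zeros η = k →
    ∃ t L : List (Fin (n - 1)), t.Sublist L ∧
      γ = (fun i => etaMin n k (wordProd n t i)) ∧ η = (fun i => etaMin n k (wordProd n L i)) ∧
      t.length + rkk (etaMin n k) = rkk γ ∧ L.length + rkk (etaMin n k) = rkk η := by
  intro N
  induction N using Nat.strong_induction_on with
  | _ N ih =>
  intro γ η hN hdom hk
  by_cases hd : ∀ i : ℕ, i + 1 < n → ext0 η i = 1 → ext0 η (i + 1) = 1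
  · have hη := no_descent η hd
    rw [hk] at hη
    have hγ : γ = etaMin n k := by
      apply pre_inj
      intro m hm
      apply le_antisymm
      · rw [← hη]; exact hdom.1 m
      · rw [pre_etaMin n k m hm]
        have h1 := pre_lower γ m (n - m)
        rw [Nat.add_sub_cancel' hm, hdom.2] at h1
        have h2 := pre_add_zeros η
        omega
    refine ⟨[], [], List.Sublist.refl _, ?_, ?_, ?_, ?_⟩
    · simpa [wordProd] using hγ
    · simpa [wordProd] using hη
    · simp [hγ]
    · simp [← hη]
  · push Not at hd
    obtain ⟨i, hin, hi1, hi0⟩ := hd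
    have hi0' : ext0 η (i + 1) = 0 := by
      have := ext0_le η (i + 1)
      omega
    obtain ⟨i', rfl⟩ : ∃ i' : Fin (n - 1), i = i' := ⟨⟨i, by omega⟩, rfl⟩
    set η' : Fin n → Fin 2 := fun x => η (s n i' x) with hη'
    have hrk := rkk_swap η i'
    rw [hi1, hi0', ← hη'] at hrk
    have hpre' : ∀ m, pre η' m = if m = i' + 1 then pre η i' else pre η m := by
      intro m
      rw [hη', pre_swap, hi0']
      rfl
    have hpn : pre η' n = pre η n := by
      rw [hpre']
      rw [if_neg (by omega)]
    have hz' : zeros η' = k := by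
      have h1 := pre_add_zeros η
      have h2 := pre_add_zeros η'
      omega
    have hss : ∀ x, s n i' (s n i' x) = x := by
      intro x
      unfold s
      exact Equiv.swap_apply_self _ _ x
    have hback : ∀ ζ : Fin n → Fin 2, (fun x => (fun y => ζ (s n i' y)) (s n i' x)) = ζ := by
      intro ζ
      funext x
      simp only [hss]
    by_cases hγd : ext0 γ i' = 1 ∧ ext0 γ (i' + 1) = 0
    · set γ' : Fin n → Fin 2 := fun x => γ (s n i' x) with hγ'
      have hrkγ := rkk_swap γ i'
      rw [hγd.1, hγd.2, ← hγ'] at hrkγ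
      have hpreγ' : ∀ m, pre γ' m = if m = i' + 1 then pre γ i' else pre γ m := by
        intro m
        rw [hγ', pre_swap, hγd.2]
        rfl
      obtain ⟨t, L, hsub, h1, h2, h3, h4⟩ := ih (rkk η') (by omega) γ' η' rfl (by
        refine ⟨fun m => ?_, ?_⟩
        · rw [hpreγ', hpre']
          split_ifs
          · exact hdom.1 _
          · exact hdom.1 _
        · rw [hpreγ', hpn, if_neg (by omega)]
          exact hdom.2) hz'
      refine ⟨t ++ [i'], L ++ [i'], hsub.append (List.Sublist.refl _), ?_, ?_, ?_, ?_⟩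
      · rw [wordProd_append, ← hback γ, ← hγ', h1]
        rfl
      · rw [wordProd_append, ← hback η, ← hη', h2]
        rfl
      · rw [List.length_append, List.length_singleton]
        omega
      · rw [List.length_append, List.length_singleton]
        omega
    · obtain ⟨t, L, hsub, h1, h2, h3, h4⟩ := ih (rkk η') (by omega) γ η' rfl (by
        refine ⟨fun m => ?_, ?_⟩
        · rw [hpre']
          split_ifs with hm
          · rw [hm]
            have e1 := pre_succ γ i'
            have e2 := pre_succ γ (i' + 1)
            have e3 := pre_succ η i'
            have e4 := pre_succ η (i' + 1)
            have d1 := hdom.1 i'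
            have d2 := hdom.1 (i' + 1 + 1)
            have l1 := ext0_le γ i'
            have l2 := ext0_le γ (i' + 1)
            omega
          · exact hdom.1 _
        · rw [hpn]
          exact hdom.2) hz'
      refine ⟨t, L ++ [i'], hsub.trans (List.sublist_append_left _ _), h1, ?_, h3, ?_⟩
      · rw [wordProd_append, ← hback η, ← hη', h2]
        rfl
      · rw [List.length_append, List.length_singleton]
        omega

theorem etaMin_parab (n k : ℕ) (x : Equiv.Perm (Fin n))
    (hx : x ∈ parab n (Finset.univ.filter (fun i : Fin (n - 1) => (i : ℕ) + 1 ≠ k)))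
    (j : Fin n) : etaMin n k (x j) = etaMin n k j := by
  unfold parab at hx
  induction hx using Subgroup.closure_induction generalizing j with
  | mem x hx =>
    obtain ⟨i, hi, rfl⟩ := hx
    have hik : (i : ℕ) + 1 ≠ k := by simpa using hi
    unfold s
    rw [Equiv.swap_apply_def]
    unfold etaMin
    split_ifs with h1 h2 h3 h4 h5 h6 h7 h8 <;> simp_all <;> omega
  | one => rfl
  | mul x y _ _ hx hy => rw [Equiv.Perm.mul_apply, hx, hy]
  | inv x _ hx =>
    have := hx (x⁻¹ j)
    rw [← Equiv.Perm.mul_apply, mul_inv_cancel, Equiv.Perm.one_apply] at this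
    exact this.symm

theorem exists_word_parab (n : ℕ) (P : Finset (Fin (n - 1))) (x : Equiv.Perm (Fin n))
    (hx : x ∈ parab n P) : ∃ t, wordProd n t = x := by
  unfold parab at hx
  induction hx using Subgroup.closure_induction with
  | mem x hx =>
    obtain ⟨i, _, rfl⟩ := hx
    exact ⟨[i], by simp [wordProd]⟩
  | one => exact ⟨[], by simp [wordProd]⟩
  | mul x y _ _ hx hy =>
    obtain ⟨t, rfl⟩ := hx
    obtain ⟨t', rfl⟩ := hy
    exact ⟨t ++ t', by simp [wordProd]⟩
  | inv x _ hx =>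
    obtain ⟨t, rfl⟩ := hx
    refine ⟨t.reverse, ?_⟩
    have hs : ∀ i, (s n i)⁻¹ = s n i := by
      intro i
      unfold s
      exact Equiv.swap_inv _ _
    have hs' : ((fun x : Equiv.Perm (Fin n) => x⁻¹) ∘ s n) = s n := funext hs
    unfold wordProd
    rw [List.prod_inv_reverse, List.map_map, hs', List.map_reverse]

theorem len_le_word (n : ℕ) (t : List (Fin (n - 1))) : len n (wordProd n t) ≤ t.length :=
  Nat.sInf_le ⟨t, rfl, rfl⟩

theorem le_len (n k : ℕ) (w : Equiv.Perm (Fin n)) (hw : ∃ t, wordProd n t = w) :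
    rkk (fun x => etaMin n k (w x)) ≤ rkk (etaMin n k) + len n w := by
  obtain ⟨t, ht⟩ := hw
  have hmem : len n w ∈ {k | ∃ l : List (Fin (n - 1)), l.length = k ∧ wordProd n l = w} :=
    Nat.sInf_mem ⟨t.length, t, rfl, ht⟩
  obtain ⟨t', h1, h2⟩ := hmem
  rw [← h1, ← h2]
  exact rkk_word_le n k t'

theorem shortRep_word (n k : ℕ) (t : List (Fin (n - 1)))
    (ht : t.length + rkk (etaMin n k) = rkk (fun i => etaMin n k (wordProd n t i))) :
    shortRep n k (wordProd n t) := by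
  intro x hx
  have h1 := len_le_word n t
  obtain ⟨t', ht'⟩ := exists_word_parab n _ x hx
  have h2 := le_len n k (x * wordProd n t) ⟨t' ++ t, by simp [wordProd, ← ht']⟩
  have h3 : (fun i => etaMin n k ((x * wordProd n t) i)) =
      (fun i => etaMin n k (wordProd n t i)) := by
    funext i
    rw [Equiv.Perm.mul_apply]
    exact etaMin_parab n k x hx _
  rw [h3] at h2
  omega

theorem seqLT_of_domLT {n : ℕ} {γ η : Fin n → Fin 2} (h : domLT γ η) :
    seqLT n (zeros η) γ η := by
  obtain ⟨t, L, hsub, h1, h2, h3, h4⟩ := exists_words (rkk η) γ η rfl h.1 rfl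
  refine ⟨wordProd n t, wordProd n L, ?_, ?_, ⟨⟨L, ?_, rfl, t, hsub, rfl⟩, ?_⟩, h1, h2⟩
  · exact shortRep_word _ _ _ (by rw [← h1]; exact h3)
  · exact shortRep_word _ _ _ (by rw [← h2]; exact h4)
  · apply le_antisymm
    · have := le_len n (zeros η) (wordProd n L) ⟨L, rfl⟩
      rw [← h2] at this
      omega
    · exact len_le_word n L
  · intro heq
    apply h.2
    rw [h1, heq, ← h2]

/-!
STATEMENT 12: For every sequence `a = (a_1,…,a_l)` of strictly positive integers and every
standard basis element `v^a_η` of `V(a)` there is a unique bar-invariant element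
`v^{◊a}_η` such that `v^{◊a}_η - v^a_η` is a `q·ℤ[q]`-linear combination of standard basis
elements strictly smaller than `v^a_η` (Lusztig's canonical basis of `V(a)`).

`V(a) = V(a_1) ⊗ ⋯ ⊗ V(a_l)` is modelled concretely as `(Fin l → Fin 2) → ℂ(q)` with
standard basis `v^a_η = eb η`; the bar involution is defined inductively via
`Θ' = 1 + (q⁻¹-q) E ⊗ F` (`barV` on standard basis vectors, extended semilinearly with
respect to the field homomorphism `barK` implementing `q ↦ q⁻¹`), and the partial order
`seqLT` on standard basis vectors of a given weight is induced from the Bruhat order via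
`w ↦ η_min·w`.
-/

theorem statement12 (l : ℕ) (a : ℕ → ℕ) (ha : ∀ i, 0 < a i)
    (barK : K →+* K) (hbarKq : barK q = q⁻¹)
    (hbarKc : ∀ z : ℂ, barK (algebraMap ℂ K z) = algebraMap ℂ K z)
    (η : Fin l → Fin 2) :
    ∃! v : V l, IsCanon barK a l η v := by
  have hadd := barSemi_add barK a l
  have hsmul := barSemi_smul barK a l
  have hinv := barSemi_barSemi barK hbarKq hbarKc a l
  have hdiag : ∀ γ, barSemi barK a l (eb γ) γ = 1 := by
    intro γ
    rw [barSemi_eb, barV_diag]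
  have hrel : ∀ γ δ, γ ≠ δ → barSemi barK a l (eb δ) γ ≠ 0 → domLT γ δ := by
    intro γ δ hne h
    rw [barSemi_eb] at h
    exact ⟨barV_domLE a l γ δ h, hne⟩
  have hAA : ∀ γ δ, barSemi barK a l (eb δ) γ ∈ AA := by
    intro γ δ
    rw [barSemi_eb]
    apply barV_AA
    intro ε
    unfold eb
    split_ifs
    · exact AA.one_mem
    · exact AA.zero_mem
  have hsum : ∀ (R : (Fin l → Fin 2) → Polynomial ℤ) (γ : Fin l → Fin 2),
      (∑ δ : Fin l → Fin 2, (q * Polynomial.aeval q (R δ)) • eb δ) γ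
        = q * Polynomial.aeval q (R γ) := by
    intro R γ
    have := congrFun (V_expand (fun δ => q * Polynomial.aeval q (R δ))) γ
    exact this.symm
  have hneg : ∀ f : V l, barSemi barK a l (-f) = - barSemi barK a l f := by
    intro f
    have := hsmul (-1) f
    simpa using this
  have hsub : ∀ f g : V l, barSemi barK a l (f - g) = barSemi barK a l f - barSemi barK a l g := by
    intro f g
    rw [sub_eq_add_neg, hadd, hneg, sub_eq_add_neg]
  have hex : ∃ v : V l, IsCanon barK a l η v := by
    obtain ⟨y, hy, hyS⟩ := KL_exists barK hbarKq (barSemi barK a l) rkk domLT hadd hsmul hdiag hinv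
      hrel (fun γ δ h => rkk_lt h) hAA _ (Finset.univ.filter fun γ => domLT γ η) rfl
      (by
        intro γ δ h hδ
        rw [Finset.mem_filter] at hδ ⊢
        exact ⟨Finset.mem_univ _, domLT_trans h hδ.2⟩)
      (barSemi barK a l (eb η) - eb η)
      (by
        intro γ
        refine AA.sub_mem (hAA _ _) ?_
        unfold eb
        split_ifs
        · exact AA.one_mem
        · exact AA.zero_mem)
      (by
        intro γ hγ
        rw [Finset.mem_filter]
        refine ⟨Finset.mem_univ _, ?_⟩
        have hne : γ ≠ η := by
          rintro rfl
          apply hγ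
          rw [Pi.sub_apply, hdiag, eb_self, sub_self]
        apply hrel γ η hne
        intro h
        apply hγ
        rw [Pi.sub_apply, h, eb_ne hne, sub_zero])
      (by
        rw [hsub, hinv]
        abel)
    choose R hR hR0 using hyS
    refine ⟨eb η + y, ?_, R, ?_, ?_⟩
    · rw [hadd]
      have : barSemi barK a l (eb η) = eb η + (y - barSemi barK a l y) := by
        rw [← hy]
        abel
      rw [this]
      abel
    · intro γ hγ
      apply hR0
      intro h
      exact hγ (seqLT_of_domLT (Finset.mem_filter.mp h).2)
    · congr 1
      funext γ
      rw [hsum, hR]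
  obtain ⟨v, hv⟩ := hex
  refine ⟨v, hv, ?_⟩
  intro v' hv'
  obtain ⟨h1, R, _, h2⟩ := hv
  obtain ⟨h1', R', _, h2'⟩ := hv'
  rw [← sub_eq_zero]
  apply KL_unique barK hbarKq (barSemi barK a l) rkk hadd hsmul hdiag
    (fun γ δ h h' => rkk_lt (hrel γ δ h h'))
  · rw [hsub, h1, h1']
  · intro γ
    refine ⟨R' γ - R γ, ?_⟩
    rw [Pi.sub_apply, h2, h2', Pi.add_apply, Pi.add_apply, hsum, hsum, map_sub]
    ring
end
end
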